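/- arXiv:1611.08870 — 2 statements merged into one kernel-verified Lean document; each statement's English description precedes it below -/
import Mathlib

section
/- Suppose that for every α in an index set A with 1 ≤ |A| ≤ ω, F(α) is a π-tree on a topological space X_α, and for each α ∈ A there is a family γ_α of subsets of ω such that |γ_α| ≤ ω, γ_α has the finite intersection property, and γ_α ≫ Rise_{F(α)}(X_α). Suppose in addition that G is a π-tree on a space Y and Rise_G(Y) has the finite intersection property. Then the product space Y × ∏_{α∈A} X_α has a π-tree. -/
open Set

universe u v

/-- A family `γ` π-refines `δ`: every nonempty member of `δ` contains a
nonempty member of `γ`. -/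
def PiRefines {α : Type*} (γ δ : Set (Set α)) : Prop :=
  ∀ D ∈ δ, D.Nonempty → ∃ G ∈ γ, G.Nonempty ∧ G ⊆ D

/-- The finite intersection property. -/
def HasFIP {α : Type*} (γ : Set (Set α)) : Prop :=
  ∀ δ : Set (Set α), δ ⊆ γ → δ.Finite → δ.Nonempty → (⋂₀ δ).Nonempty

/-- `cofin A` is the family of complements in `A` of finite subsets of `A`. -/
def cofin (A : Set ℕ) : Set (Set ℕ) :=
  {B | ∃ C : Set ℕ, C.Finite ∧ C ⊆ A ∧ B = A \ C}

/-- A foliage tree on `X`: a set-theoretic tree (strict partial order with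
well-ordered sets of strict predecessors) with a leaf (a subset of `X`)
attached to each node. -/
structure FoliageTree (X : Type u) where
  Node : Type
  lt : Node → Node → Prop
  lt_irrefl : ∀ a, ¬ lt a a
  lt_trans : ∀ {a b c}, lt a b → lt b c → lt a c
  wellOrdered : ∀ a : Node, IsWellOrder {b : Node // lt b a} fun x y => lt x.1 y.1
  leaf : Node → Set X

/-- Strict proper-extension order on finite sequences of naturals. -/
def seqLT (a b : List ℕ) : Prop := a <+: b ∧ a ≠ b

namespace FoliageTree

variable {X : Type u}

/-- The sons (immediate successors) of a node. -/
def Sons (F : FoliageTree X) (x : F.Node) : Set F.Node :=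
  {s | F.lt x s ∧ ¬ ∃ t, F.lt x t ∧ F.lt t s}

/-- A node is maximal if it has no strict successor. -/
def IsMaxNode (F : FoliageTree X) (x : F.Node) : Prop := ¬ ∃ s, F.lt x s

/-- A chain of nodes. -/
def IsChainN (F : FoliageTree X) (C : Set F.Node) : Prop :=
  ∀ x ∈ C, ∀ y ∈ C, F.lt x y ∨ x = y ∨ F.lt y x

/-- A branch is a maximal chain. -/
def IsBranch (F : FoliageTree X) (B : Set F.Node) : Prop :=
  F.IsChainN B ∧ ∀ C, F.IsChainN C → B ⊆ C → B = C

/-- The height of a node: the order type of its set of strict predecessors. -/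
noncomputable def height (F : FoliageTree X) (v : F.Node) : Ordinal :=
  @Ordinal.type {b : F.Node // F.lt b v} (fun x y => F.lt x.1 y.1) (F.wellOrdered v)

/-- `shoot F v`: unions of leaves over cofinite sets of sons of `v`. -/
def shoot (F : FoliageTree X) (v : F.Node) : Set (Set X) :=
  {S | ∃ C : Set F.Node, C ⊆ F.Sons v ∧ (F.Sons v \ C).Finite ∧ S = ⋃ s ∈ C, F.leaf s}

/-- `scope F p`: the nodes whose leaf contains `p`. -/
def scope (F : FoliageTree X) (p : X) : Set F.Node := {x | p ∈ F.leaf x}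

/-- The union of all leaves. -/
def flesh (F : FoliageTree X) : Set X := ⋃ x, F.leaf x

/-- `F` is a foliage `ω,ω`-tree: its skeleton is order-isomorphic to
`(ω^{<ω}, ⊂)`. -/
def IsOmegaOmegaTree (F : FoliageTree X) : Prop := Nonempty (F.lt ≃r seqLT)

/-- `F` is locally strict: the leaf of every non-maximal node is the disjoint
union of the leaves of its sons. -/
def LocallyStrict (F : FoliageTree X) : Prop :=
  ∀ x, ¬ F.IsMaxNode x →
    F.leaf x = (⋃ s ∈ F.Sons x, F.leaf s) ∧
      ∀ s ∈ F.Sons x, ∀ t ∈ F.Sons x, s ≠ t → Disjoint (F.leaf s) (F.leaf t)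

/-- `F` has strict branches: it has nodes, and along every branch the
intersection of the leaves is a singleton. -/
def StrictBranches (F : FoliageTree X) : Prop :=
  Nonempty F.Node ∧ ∀ B, F.IsBranch B → ∃ p, (⋂ x ∈ B, F.leaf x) = {p}

/-- `r` is the root: the least node. -/
def IsRoot (F : FoliageTree X) (r : F.Node) : Prop := ∀ x, r = x ∨ F.lt r x

/-- All leaves are open. -/
def OpenIn [TopologicalSpace X] (F : FoliageTree X) : Prop := ∀ x, IsOpen (F.leaf x)

/-- `F` is a Baire foliage tree on `X`. -/
def IsBaireFoliageTree [TopologicalSpace X] (F : FoliageTree X) : Prop :=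
  F.OpenIn ∧ F.LocallyStrict ∧ F.IsOmegaOmegaTree ∧ F.StrictBranches ∧
    ∃ r, F.IsRoot r ∧ F.leaf r = Set.univ

/-- `F` grows into `X`. -/
def GrowsInto [TopologicalSpace X] (F : FoliageTree X) : Prop :=
  ∀ p : X, ∀ U ∈ nhds p, ∃ z ∈ F.scope p, PiRefines (F.shoot z) {U}

/-- `F` is a π-tree on `X`. -/
def IsPiTree [TopologicalSpace X] (F : FoliageTree X) : Prop :=
  F.IsBaireFoliageTree ∧ F.GrowsInto

/-- `rise F p U`: the set of (finite) heights of nodes `v` whose leaf contains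
`p` and whose shoot π-refines `{U}`. -/
noncomputable def rise (F : FoliageTree X) (p : X) (U : Set X) : Set ℕ :=
  {n | ∃ v ∈ F.scope p, PiRefines (F.shoot v) {U} ∧ F.height v = (n : Ordinal)}

/-- `Rise F`: all sets `rise F p U` for `p ∈ X` and `U` a neighbourhood of `p`. -/
def Rise [TopologicalSpace X] (F : FoliageTree X) : Set (Set ℕ) :=
  {R | ∃ p U, U ∈ nhds p ∧ R = F.rise p U}

end FoliageTree

open Filter Topology

/-!
Sending a point to the branch of nodes whose leaves contain it identifies π-trees on a space with
continuous bijections `φ` onto the Baire space `ℕ → ℕ` such that each neighbourhood of a point `p`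
contains, for some `n`, all points `x` with `φ x i = φ p i` for `i < n` and `φ x n` large; the
numbers `n` with this property form the rise of the neighbourhood.

A countable family `γ a` with the finite intersection property which refines the rises of `X a` has
a pseudo-intersection: there is an increasing sequence `s a` which is eventually in every rise of
`X a`. Cut the coordinates of `X a` into blocks starting at the values of `s a`, and let stage `n`
of the product consist of the `n`-th coordinate of `Y` and the `n`-th blocks of those `X a` that
come early enough in an enumeration of `A`. A basic neighbourhood in the product restricts `Y` and
finitely many `X a`; infinitely many stages are good for `Y` and almost all are good for each `X a`,
so some stage is good for the whole neighbourhood.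

It remains to turn the stages into a single sequence. The finitely many numbers at stage `n` are
coded by two numbers, of which the first is a lower bound for all of them; these become the entries
`2 * n` and `2 * n + 1`, so that all coordinates at stage `n` are large as soon as the entry `2 * n`
is.
-/

/-- The finite sequence of the first `n` values of `f`: the node of height `n` on the branch of
`ω^{<ω}` determined by `f`. Unlike `PiNat.res f n`, it is listed in increasing order of indices,
so that extension of sequences is the prefix order. -/
def initSeg (f : ℕ → ℕ) (n : ℕ) : List ℕ := (List.range n).map f

@[simp]
theorem length_initSeg (f : ℕ → ℕ) (n : ℕ) : (initSeg f n).length = n := by simp [initSeg]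

@[simp]
theorem getElem_initSeg {f : ℕ → ℕ} {n i : ℕ} (h : i < (initSeg f n).length) :
    (initSeg f n)[i] = f i := by simp [initSeg]

theorem initSeg_succ (f : ℕ → ℕ) (n : ℕ) : initSeg f (n + 1) = initSeg f n ++ [f n] := by
  simp [initSeg, List.range_succ]

theorem initSeg_prefix (f : ℕ → ℕ) {m n : ℕ} (h : m ≤ n) : initSeg f m <+: initSeg f n := by
  rw [List.prefix_iff_eq_take, length_initSeg, initSeg, initSeg, ← List.map_take, List.take_range,
    min_eq_left h]

theorem initSeg_eq_initSeg_iff {f g : ℕ → ℕ} {n : ℕ} :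
    initSeg f n = initSeg g n ↔ f ∈ PiNat.cylinder g n := by
  simp [initSeg, PiNat.cylinder]

theorem isOpen_setOf_initSeg_eq (n : ℕ) (l : List ℕ) : IsOpen {f : ℕ → ℕ | initSeg f n = l} := by
  refine isOpen_iff_forall_mem_open.2 fun f hf => ⟨PiNat.cylinder f n, fun g hg => ?_,
    PiNat.isOpen_cylinder _ f n, PiNat.self_mem_cylinder f n⟩
  exact (initSeg_eq_initSeg_iff.2 hg).trans hf

theorem initSeg_length_append_singleton_iff {f : ℕ → ℕ} {l : List ℕ} {k : ℕ} :
    initSeg f (l ++ [k]).length = l ++ [k] ↔ initSeg f l.length = l ∧ f l.length = k := by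
  rw [List.length_append, List.length_singleton, initSeg_succ, ← List.concat_eq_append,
    ← List.concat_eq_append, List.concat_inj]

theorem exists_initSeg_eq_of_pairwise_prefix {S : Set (List ℕ)}
    (hS : ∀ a ∈ S, ∀ b ∈ S, a <+: b ∨ b <+: a) :
    ∃ f : ℕ → ℕ, ∀ l ∈ S, initSeg f l.length = l := by
  have hentry : ∀ i, ∃ k, ∀ l ∈ S, i < l.length → l[i]? = some k := by
    intro i
    by_cases h : ∃ a ∈ S, i < a.length
    · obtain ⟨a, ha, hia⟩ := h
      refine ⟨a[i], fun b hb hib => ?_⟩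
      rcases hS a ha b hb with hab | hba
      · rw [hab.getElem hia, List.getElem?_eq_getElem hib]
      · rw [← hba.getElem hib, List.getElem?_eq_getElem hib]
    · exact ⟨0, fun l hl hi => (h ⟨l, hl, hi⟩).elim⟩
  choose f hf using hentry
  refine ⟨f, fun l hl => List.ext_getElem (by simp) fun i _ hi => ?_⟩
  have := hf i l hl hi
  rw [List.getElem?_eq_getElem hi, Option.some_inj] at this
  simpa using this.symm

theorem exists_mem_iff_initSeg_eq {S : Set (List ℕ)} (hnil : [] ∈ S)
    (hclosed : ∀ l k, l ++ [k] ∈ S → l ∈ S) (hnext : ∀ l ∈ S, ∃! k, l ++ [k] ∈ S) :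
    ∃ f : ℕ → ℕ, ∀ l, l ∈ S ↔ initSeg f l.length = l := by
  choose! g hg hguniq using hnext
  let L : ℕ → List ℕ := fun n => Nat.rec [] (fun _ l => l ++ [g l]) n
  have hL : ∀ n, initSeg (fun n => g (L n)) n = L n := by
    intro n
    induction n with
    | zero => rfl
    | succ n ih => rw [initSeg_succ, ih]
  have hmem : ∀ n, L n ∈ S := by
    intro n
    induction n with
    | zero => exact hnil
    | succ n ih => exact hg _ ih
  refine ⟨fun n => g (L n), fun l => ⟨fun hl => ?_, fun hl => hl ▸ hL l.length ▸ hmem l.length⟩⟩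
  induction l using List.reverseRecOn with
  | nil => rfl
  | append_singleton l k ih =>
    have hlS := hclosed l k hl
    have hLl : L l.length = l := (hL _).symm.trans (ih hlS)
    refine initSeg_length_append_singleton_iff.2 ⟨ih hlS, ?_⟩
    simp only [hLl]
    exact (hguniq l hlS k hl).symm

theorem seqLT_iff_length_lt {a b : List ℕ} : seqLT a b ↔ a <+: b ∧ a.length < b.length :=
  ⟨fun h => ⟨h.1, h.1.length_le.lt_of_ne fun e => h.2 (h.1.eq_of_length e)⟩,
    fun h => ⟨h.1, fun e => h.2.ne (congrArg List.length e)⟩⟩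

theorem seqLT.length_lt {a b : List ℕ} (h : seqLT a b) : a.length < b.length :=
  (seqLT_iff_length_lt.1 h).2

theorem seqLT.trans {a b c : List ℕ} (hab : seqLT a b) (hbc : seqLT b c) : seqLT a c :=
  seqLT_iff_length_lt.2 ⟨hab.1.trans hbc.1, hab.length_lt.trans hbc.length_lt⟩

theorem seqLT_append_singleton (l : List ℕ) (k : ℕ) : seqLT l (l ++ [k]) :=
  seqLT_iff_length_lt.2 ⟨List.prefix_append _ _, by simp⟩

theorem seqLT.exists_append_singleton_prefix {l t : List ℕ} (h : seqLT l t) :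
    ∃ k, l ++ [k] <+: t := by
  obtain ⟨⟨_ | ⟨k, r⟩, rfl⟩, hne⟩ := h
  · simp at hne
  · exact ⟨k, by simp⟩

theorem seqLT_immediate_iff {l s : List ℕ} :
    (seqLT l s ∧ ¬∃ t, seqLT l t ∧ seqLT t s) ↔ ∃ k, s = l ++ [k] := by
  constructor
  · rintro ⟨hls, hmin⟩
    obtain ⟨k, hk⟩ := hls.exists_append_singleton_prefix
    by_contra! hne
    exact hmin ⟨_, seqLT_append_singleton l k, hk, (hne k).symm⟩
  · rintro ⟨k, rfl⟩
    refine ⟨seqLT_append_singleton l k, ?_⟩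
    rintro ⟨t, hlt, hts⟩
    have := hlt.length_lt
    have := hts.length_lt
    grind

theorem isWellOrder_seqLT_initial (l : List ℕ) :
    IsWellOrder {b : List ℕ // seqLT b l} (fun x y => seqLT x.1 y.1) where
  trichotomous := by
    rintro ⟨x, hx⟩ ⟨y, hy⟩ hxy hyx
    refine Subtype.ext (by_contra fun hne => ?_)
    rcases List.prefix_or_prefix_of_prefix hx.1 hy.1 with h | h
    · exact hxy ⟨h, hne⟩
    · exact hyx ⟨h, Ne.symm hne⟩
  wf := Subrelation.wf seqLT.length_lt (measure fun x : {b // seqLT b l} => x.1.length).wf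

theorem mk_seqLT_initial (l : List ℕ) : Cardinal.mk {b : List ℕ // seqLT b l} = l.length := by
  have hbij : Function.Bijective
      fun b : {b // seqLT b l} => (⟨b.1.length, b.2.length_lt⟩ : Fin l.length) := by
    refine ⟨fun a b hab => Subtype.ext ?_, fun i => ?_⟩
    · have hlen : a.1.length = b.1.length := congrArg Fin.val hab
      exact (List.prefix_of_prefix_length_le a.2.1 b.2.1 hlen.le).eq_of_length hlen
    · have hlen : (l.take i).length = i := by simp [i.2.le]
      have hlt : seqLT (l.take i) l :=
        seqLT_iff_length_lt.2 ⟨List.take_prefix _ _, hlen.trans_lt i.2⟩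
      exact ⟨⟨l.take i, hlt⟩, Fin.ext hlen⟩
  rw [Cardinal.mk_congr (Equiv.ofBijective _ hbij), Cardinal.mk_fin]

section StageFilter

variable {X Y I J : Type*}

/-- For a coding `c` of the points of `X` by functions on an index set `I`, which is cut into
stages by `st : I → ℕ`: the filter generated by the sets of points which agree with `p` in all
coordinates before stage `n` and whose coordinates at stage `n` are at least `m`. For `I = ℕ` and
`st = id` its members are the nonempty sets `U` such that the shoot of the node of height `n` whose
leaf contains `p` π-refines `{U}`. -/
def stageFilter (c : X → I → ℕ) (st : I → ℕ) (p : X) (n : ℕ) : Filter X where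
  sets := {U | ∃ m, ∀ x, (∀ i, st i < n → c x i = c p i) → (∀ i, st i = n → m ≤ c x i) → x ∈ U}
  univ_sets := ⟨0, fun _ _ _ => mem_univ _⟩
  sets_of_superset := fun ⟨m, hm⟩ hUV => ⟨m, fun x hlt heq => hUV (hm x hlt heq)⟩
  inter_sets := fun ⟨m, hm⟩ ⟨k, hk⟩ => ⟨max m k, fun x hlt heq =>
    ⟨hm x hlt fun i hi => le_of_max_le_left (heq i hi),
      hk x hlt fun i hi => le_of_max_le_right (heq i hi)⟩⟩

theorem mem_stageFilter_iff {c : X → I → ℕ} {st : I → ℕ} {p : X} {n : ℕ} {U : Set X} :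
    U ∈ stageFilter c st p n ↔ ∃ m, ∀ x, (∀ i, st i < n → c x i = c p i) →
      (∀ i, st i = n → m ≤ c x i) → x ∈ U := Iff.rfl

theorem mem_stageFilter_id_iff {φ : X → ℕ → ℕ} {p : X} {n : ℕ} {U : Set X} :
    U ∈ stageFilter φ id p n ↔ ∃ m, ∀ x, φ x ∈ PiNat.cylinder (φ p) n → m ≤ φ x n → x ∈ U := by
  simp [mem_stageFilter_iff, PiNat.cylinder]

theorem tendsto_stageFilter {c : X → I → ℕ} {st : I → ℕ} {d : Y → J → ℕ} {st' : J → ℕ} {π : X → Y}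
    {r : J → I} (hr : ∀ x j, c x (r j) = d (π x) j) {n k : ℕ} (hlt : ∀ j, st' j < k → st (r j) < n)
    (heq : ∀ j, st' j = k → st (r j) = n) (p : X) :
    Tendsto π (stageFilter c st p n) (stageFilter d st' (π p) k) :=
  fun _ ⟨m, hm⟩ => ⟨m, fun x hx hmx => hm (π x)
    (fun j hj => by simpa only [hr] using hx (r j) (hlt j hj))
    (fun j hj => by simpa only [hr] using hmx (r j) (heq j hj))⟩

theorem le_of_preimage_cylinder_mem_stageFilter {φ : X ≃ (ℕ → ℕ)} {p : X} {m n : ℕ}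
    (h : φ ⁻¹' PiNat.cylinder (φ p) m ∈ stageFilter φ id p n) : m ≤ n := by
  obtain ⟨k, hk⟩ := mem_stageFilter_id_iff.1 h
  by_contra! hnm
  have hmem := hk (φ.symm (Function.update (φ p) n (k + φ p n + 1)))
    (by simpa using PiNat.update_mem_cylinder (φ p) n _) (by simp [add_assoc])
  rw [mem_preimage, Equiv.apply_symm_apply] at hmem
  have heq := hmem n hnm
  rw [Function.update_self] at heq
  lia

/-- A continuous bijection `c` from `X` onto `I → ℕ`, where `I` is cut into stages by `st`, such
that every neighbourhood of a point belongs to one of the filters `stageFilter` at that point. For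
`I = ℕ` and `st = id` such bijections correspond to the π-trees on `X`, a node of height `n` being
the set of points with a given initial segment of length `n`. -/
structure IsPiCoding [TopologicalSpace X] (c : X ≃ (I → ℕ)) (st : I → ℕ) : Prop where
  continuous : Continuous c
  exists_mem_stageFilter : ∀ p, ∀ U ∈ 𝓝 p, ∃ n, U ∈ stageFilter c st p n

theorem preimage_cylinder_mem_nhds [TopologicalSpace X] {φ : X → ℕ → ℕ}
    (hφ : Continuous φ) (p : X) (m : ℕ) : φ ⁻¹' PiNat.cylinder (φ p) m ∈ 𝓝 p :=
  ((PiNat.isOpen_cylinder _ (φ p) m).preimage hφ).mem_nhds (PiNat.self_mem_cylinder _ _)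

theorem IsPiCoding.frequently_mem_stageFilter [TopologicalSpace X] {φ : X ≃ (ℕ → ℕ)}
    (hφ : IsPiCoding φ id) (p : X) {U : Set X} (hU : U ∈ 𝓝 p) :
    ∃ᶠ n in atTop, U ∈ stageFilter φ id p n := by
  refine frequently_atTop.2 fun m => ?_
  obtain ⟨n, hn⟩ := hφ.exists_mem_stageFilter p _
    (inter_mem hU (preimage_cylinder_mem_nhds hφ.continuous p m))
  rw [inter_mem_iff] at hn
  exact ⟨n, le_of_preimage_cylinder_mem_stageFilter hn.2, hn.1⟩

end StageFilter

namespace FoliageTree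

variable {X : Type u} {F : FoliageTree X} (ψ : F.lt ≃r seqLT)

theorem sons_eq_range (v : F.Node) : F.Sons v = range fun k => ψ.symm (ψ v ++ [k]) := by
  ext s
  have hson : s ∈ F.Sons v ↔ seqLT (ψ v) (ψ s) ∧ ¬∃ t, seqLT (ψ v) t ∧ seqLT t (ψ s) := by
    simp only [Sons, mem_ofPred_eq, ← ψ.map_rel_iff, ψ.surjective.exists]
  rw [hson, seqLT_immediate_iff]
  exact exists_congr fun k => by rw [RelIso.symm_apply_eq, eq_comm]

theorem injective_son (v : F.Node) : Function.Injective fun k => ψ.symm (ψ v ++ [k]) :=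
  fun _ _ h => by simpa using ψ.symm.injective h

include ψ in
theorem not_isMaxNode (v : F.Node) : ¬F.IsMaxNode v := by
  have hson : ψ.symm (ψ v ++ [0]) ∈ F.Sons v := sons_eq_range ψ v ▸ mem_range_self 0
  exact fun h => h ⟨_, hson.1⟩

theorem height_eq_length (v : F.Node) : F.height v = (ψ v).length := by
  have e : {u // F.lt u v} ≃ {b // seqLT b (ψ v)} :=
    ψ.toEquiv.subtypeEquiv fun _ => ψ.map_rel_iff.symm
  have := F.wellOrdered v
  rw [height, ← Ordinal.card_eq_nat, Ordinal.card_type, Cardinal.mk_congr e, mk_seqLT_initial]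

theorem isRoot_iff {r : F.Node} : F.IsRoot r ↔ ψ r = [] := by
  refine ⟨fun h => ?_, fun h v => or_iff_not_imp_left.2 fun hne => ?_⟩
  · rcases h (ψ.symm []) with h | h
    · simp [h]
    · simpa using (ψ.map_rel_iff.2 h).length_lt
  · exact ψ.map_rel_iff.1 ⟨h ▸ List.nil_prefix, ψ.injective.ne hne⟩

/-- The branch of a foliage `ω,ω`-tree consisting of the nodes that correspond under `ψ` to the
initial segments of `f`. -/
def branchOf (f : ℕ → ℕ) : Set F.Node := {v | initSeg f (ψ v).length = ψ v}

variable {ψ}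

theorem mem_branchOf {f : ℕ → ℕ} {v : F.Node} :
    v ∈ branchOf ψ f ↔ initSeg f (ψ v).length = ψ v := Iff.rfl

variable (ψ)

theorem symm_initSeg_mem_branchOf (f : ℕ → ℕ) (n : ℕ) : ψ.symm (initSeg f n) ∈ branchOf ψ f := by
  simp [mem_branchOf]

theorem branchOf_subset_branchOf_iff {f g : ℕ → ℕ} : branchOf ψ f ⊆ branchOf ψ g ↔ f = g := by
  refine ⟨fun h => funext fun i => ?_, fun h => h ▸ Subset.rfl⟩
  have := h (symm_initSeg_mem_branchOf ψ f (i + 1))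
  rw [mem_branchOf, RelIso.apply_symm_apply, length_initSeg, initSeg_eq_initSeg_iff] at this
  exact (this i i.lt_succ_self).symm

theorem isChainN_iff {C : Set F.Node} :
    F.IsChainN C ↔ ∀ u ∈ C, ∀ v ∈ C, ψ u <+: ψ v ∨ ψ v <+: ψ u := by
  refine forall₂_congr fun u _ => forall₂_congr fun v _ => ?_
  simp only [← ψ.map_rel_iff, ← ψ.injective.eq_iff, seqLT]
  grind [List.prefix_refl]

theorem isChainN_branchOf (f : ℕ → ℕ) : F.IsChainN (branchOf ψ f) := by
  refine (isChainN_iff ψ).2 fun u hu v hv => ?_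
  rw [← mem_branchOf.1 hu, ← mem_branchOf.1 hv]
  exact (le_total _ _).imp (initSeg_prefix f) (initSeg_prefix f)

theorem IsChainN.exists_subset_branchOf {C : Set F.Node} (hC : F.IsChainN C) :
    ∃ f, C ⊆ branchOf ψ f := by
  obtain ⟨f, hf⟩ := exists_initSeg_eq_of_pairwise_prefix (S := ψ '' C)
    (by simpa using (isChainN_iff ψ).1 hC)
  exact ⟨f, fun v hv => hf _ (mem_image_of_mem ψ hv)⟩

theorem isBranch_iff {B : Set F.Node} : F.IsBranch B ↔ ∃ f, B = branchOf ψ f := by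
  constructor
  · rintro ⟨hchain, hmax⟩
    obtain ⟨f, hf⟩ := hchain.exists_subset_branchOf ψ
    exact ⟨f, hmax _ (isChainN_branchOf ψ f) hf⟩
  · rintro ⟨f, rfl⟩
    refine ⟨isChainN_branchOf ψ f, fun C hC hsub => ?_⟩
    obtain ⟨g, hg⟩ := hC.exists_subset_branchOf ψ
    obtain rfl := (branchOf_subset_branchOf_iff ψ).1 (hsub.trans hg)
    exact hsub.antisymm hg

theorem exists_scope_eq_branchOf (hstrict : F.LocallyStrict)
    (hroot : ∃ r, F.IsRoot r ∧ F.leaf r = univ) (x : X) : ∃ f, F.scope x = branchOf ψ f := by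
  have hleaf : ∀ l, F.leaf (ψ.symm l) = ⋃ k, F.leaf (ψ.symm (l ++ [k])) := fun l => by
    rw [(hstrict _ (not_isMaxNode ψ _)).1, sons_eq_range ψ, biUnion_range, RelIso.apply_symm_apply]
  obtain ⟨r, hr, hru⟩ := hroot
  obtain ⟨f, hf⟩ := exists_mem_iff_initSeg_eq (S := {l | x ∈ F.leaf (ψ.symm l)})
    (by rw [mem_ofPred_eq, ← (isRoot_iff ψ).1 hr, RelIso.symm_apply_apply, hru]; trivial)
    (fun l k hk => by rw [mem_ofPred_eq, hleaf l]; exact mem_iUnion_of_mem k hk)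
    (fun l hl => by
      obtain ⟨k, hk⟩ := mem_iUnion.1 (hleaf l ▸ mem_ofPred_eq ▸ hl)
      refine ⟨k, hk, fun j hj => by_contra fun hne => ?_⟩
      have hson : ∀ i, ψ.symm (l ++ [i]) ∈ F.Sons (ψ.symm l) := by simp [sons_eq_range ψ]
      exact disjoint_left.1 ((hstrict _ (not_isMaxNode ψ _)).2 _ (hson j) _ (hson k)
        (by simpa using hne)) hj hk)
  refine ⟨f, ext fun v => ?_⟩
  have hv := hf (ψ v)
  rw [mem_ofPred_eq, RelIso.symm_apply_apply] at hv
  exact hv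

theorem mem_iInter_branchOf_iff {x : X} {f g : ℕ → ℕ} (hx : F.scope x = branchOf ψ g) :
    x ∈ ⋂ v ∈ branchOf ψ f, F.leaf v ↔ g = f := by
  rw [mem_iInter₂, eq_comm, ← branchOf_subset_branchOf_iff ψ, ← hx]
  rfl

/-- `φ` assigns to every point the sequence whose initial segments are the nodes (identified with
finite sequences by `ψ`) having that point in their leaf. -/
def IsCoding (φ : X → ℕ → ℕ) : Prop := ∀ x, F.scope x = branchOf ψ (φ x)

theorem exists_isCoding (hstrict : F.LocallyStrict) (hbranch : F.StrictBranches)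
    (hroot : ∃ r, F.IsRoot r ∧ F.leaf r = univ) : ∃ φ : X ≃ (ℕ → ℕ), IsCoding ψ φ := by
  choose φ hφ using exists_scope_eq_branchOf ψ hstrict hroot
  have hbij : Function.Bijective φ := by
    refine (Function.bijective_iff_existsUnique φ).2 fun f => ?_
    obtain ⟨p, hp⟩ := hbranch.2 _ ((isBranch_iff ψ).2 ⟨f, rfl⟩)
    have hiff : ∀ x, φ x = f ↔ x = p := fun x => by
      rw [← mem_iInter_branchOf_iff ψ (hφ x), hp, mem_singleton_iff]
    exact ⟨p, (hiff p).2 rfl, fun x => (hiff x).1⟩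
  exact ⟨Equiv.ofBijective φ hbij, hφ⟩

namespace IsCoding

variable {ψ} {c : X → ℕ → ℕ}

theorem mem_leaf_iff (h : IsCoding ψ c) {v : F.Node} {x : X} :
    x ∈ F.leaf v ↔ initSeg (c x) (ψ v).length = ψ v := Set.ext_iff.1 (h x) v

theorem mem_leaf_son_iff (h : IsCoding ψ c) {v : F.Node} {k : ℕ} {x : X} :
    x ∈ F.leaf (ψ.symm (ψ v ++ [k])) ↔ x ∈ F.leaf v ∧ c x (ψ v).length = k := by
  rw [h.mem_leaf_iff, h.mem_leaf_iff, RelIso.apply_symm_apply, initSeg_length_append_singleton_iff]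

theorem mem_leaf_iff_mem_cylinder (h : IsCoding ψ c) {v : F.Node} {p x : X} (hp : p ∈ F.leaf v) :
    x ∈ F.leaf v ↔ c x ∈ PiNat.cylinder (c p) (ψ v).length := by
  rw [h.mem_leaf_iff, ← initSeg_eq_initSeg_iff, h.mem_leaf_iff.1 hp]

theorem mem_leaf_symm_initSeg (h : IsCoding ψ c) (x : X) (n : ℕ) :
    x ∈ F.leaf (ψ.symm (initSeg (c x) n)) := by
  simp [h.mem_leaf_iff]

theorem openIn_iff [TopologicalSpace X] (h : IsCoding ψ c) : F.OpenIn ↔ Continuous c := by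
  refine ⟨fun hopen => continuous_pi fun i => ?_, fun hc v => ?_⟩
  · refine (IsLocallyConstant.iff_eventually_eq _).2 (fun x => ?_) |>.continuous
    have hx := h.mem_leaf_symm_initSeg x (i + 1)
    filter_upwards [(hopen _).mem_nhds hx] with y hy
    exact (h.mem_leaf_iff_mem_cylinder hx).1 hy i (by simp)
  · convert (isOpen_setOf_initSeg_eq (ψ v).length (ψ v)).preimage hc using 1
    exact ext fun x => h.mem_leaf_iff

theorem locallyStrict (h : IsCoding ψ c) : F.LocallyStrict := by
  intro v _
  rw [sons_eq_range ψ]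
  refine ⟨?_, ?_⟩
  · ext x
    simp [h.mem_leaf_son_iff]
  · rintro _ ⟨j, rfl⟩ _ ⟨k, rfl⟩ hne
    refine disjoint_left.2 fun x hj hk => hne ?_
    simp only [← (h.mem_leaf_son_iff.1 hj).2, ← (h.mem_leaf_son_iff.1 hk).2]

theorem mem_shoot_iff (h : IsCoding ψ c) {v : F.Node} {S : Set X} :
    S ∈ F.shoot v ↔
      ∃ K : Set ℕ, Kᶜ.Finite ∧ S = {x | x ∈ F.leaf v ∧ c x (ψ v).length ∈ K} := by
  have hunion : ∀ K : Set ℕ, (⋃ s ∈ (fun k => ψ.symm (ψ v ++ [k])) '' K, F.leaf s) =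
      {x | x ∈ F.leaf v ∧ c x (ψ v).length ∈ K} := by
    intro K
    ext x
    simp [h.mem_leaf_son_iff]
  have hfin : ∀ K : Set ℕ, (F.Sons v \ (fun k => ψ.symm (ψ v ++ [k])) '' K).Finite ↔ Kᶜ.Finite := by
    intro K
    rw [sons_eq_range ψ, range_sdiff_image (injective_son ψ v),
      finite_image_iff (injective_son ψ v).injOn]
  simp only [shoot, mem_ofPred_eq, ← hunion, ← hfin]
  constructor
  · rintro ⟨C, hC, hCfin, rfl⟩
    rw [sons_eq_range ψ] at hC
    obtain ⟨K, rfl⟩ := subset_range_iff_exists_image_eq.1 hC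
    exact ⟨K, hCfin, rfl⟩
  · rintro ⟨K, hK, rfl⟩
    exact ⟨_, sons_eq_range ψ v ▸ image_subset_range _ K, hK, rfl⟩

variable {φ : X ≃ (ℕ → ℕ)}

theorem strictBranches (h : IsCoding ψ φ) : F.StrictBranches := by
  refine ⟨⟨ψ.symm []⟩, fun B hB => ?_⟩
  obtain ⟨f, rfl⟩ := (isBranch_iff ψ).1 hB
  refine ⟨φ.symm f, ext fun x => ?_⟩
  rw [mem_iInter_branchOf_iff ψ (h x), mem_singleton_iff, Equiv.eq_symm_apply]

theorem isBaireFoliageTree [TopologicalSpace X] (h : IsCoding ψ φ) (hφ : Continuous φ) :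
    F.IsBaireFoliageTree :=
  ⟨h.openIn_iff.2 hφ, h.locallyStrict, ⟨ψ⟩, h.strictBranches, ψ.symm [], (isRoot_iff ψ).2 (by simp),
    eq_univ_of_forall fun x => h.mem_leaf_symm_initSeg x 0⟩

theorem piRefines_shoot_iff (h : IsCoding ψ φ) {v : F.Node} {p : X} {U : Set X}
    (hpv : p ∈ F.leaf v) (hU : U.Nonempty) :
    PiRefines (F.shoot v) {U} ↔ U ∈ stageFilter φ id p (ψ v).length := by
  rw [mem_stageFilter_id_iff]
  simp only [← h.mem_leaf_iff_mem_cylinder hpv]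
  constructor
  · intro href
    obtain ⟨S, hS, -, hSU⟩ := href U rfl hU
    obtain ⟨K, hK, rfl⟩ := h.mem_shoot_iff.1 hS
    obtain ⟨m, hm⟩ := hK.bddAbove
    exact ⟨m + 1, fun x hxv hmx => hSU ⟨hxv, by_contra fun hxK => hmx.not_gt
      (Nat.lt_succ_of_le (hm hxK))⟩⟩
  · rintro ⟨m, hm⟩ _ rfl -
    refine ⟨_, h.mem_shoot_iff.2 ⟨Ici m, by simp [finite_Iio], rfl⟩,
      ⟨φ.symm (Function.update (φ p) (ψ v).length m), ?_, ?_⟩, fun x hx => hm x hx.1 hx.2⟩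
    · rw [h.mem_leaf_iff_mem_cylinder hpv, Equiv.apply_symm_apply]
      exact PiNat.update_mem_cylinder _ _ _
    · simp

theorem rise_eq (h : IsCoding ψ φ) {p : X} {U : Set X} (hU : U.Nonempty) :
    F.rise p U = {n | U ∈ stageFilter φ id p n} := by
  ext n
  constructor
  · rintro ⟨v, hpv, href, hn⟩
    rw [height_eq_length ψ, Nat.cast_inj] at hn
    exact hn ▸ (h.piRefines_shoot_iff hpv hU).1 href
  · intro hn
    have hp := h.mem_leaf_symm_initSeg p n
    exact ⟨_, hp, (h.piRefines_shoot_iff hp hU).2 (by simpa using hn),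
      by simp [height_eq_length ψ]⟩

end IsCoding

include ψ in
theorem growsInto_iff [TopologicalSpace X] :
    F.GrowsInto ↔ ∀ p, ∀ U ∈ 𝓝 p, (F.rise p U).Nonempty := by
  refine forall₃_congr fun p U _ => ⟨?_, ?_⟩
  · rintro ⟨v, hpv, href⟩
    exact ⟨_, v, hpv, href, height_eq_length ψ v⟩
  · rintro ⟨_, v, hpv, href, -⟩
    exact ⟨v, hpv, href⟩

theorem IsPiTree.exists_isPiCoding [TopologicalSpace X] (hF : F.IsPiTree) :
    ∃ φ : X ≃ (ℕ → ℕ), IsPiCoding φ id ∧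
      ∀ p, ∀ U ∈ 𝓝 p, F.rise p U = {n | U ∈ stageFilter φ id p n} := by
  obtain ⟨⟨hopen, hstrict, ⟨ψ⟩, hbranch, hroot⟩, hgrows⟩ := hF
  obtain ⟨φ, h⟩ := exists_isCoding ψ hstrict hbranch hroot
  have hrise : ∀ p, ∀ U ∈ 𝓝 p, F.rise p U = {n | U ∈ stageFilter φ id p n} :=
    fun p U hU => h.rise_eq ⟨p, mem_of_mem_nhds hU⟩
  refine ⟨φ, ⟨h.openIn_iff.1 hopen, fun p U hU => ?_⟩, hrise⟩
  have hne := (growsInto_iff ψ).1 hgrows p U hU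
  rwa [hrise p U hU] at hne

/-- The foliage tree on the finite sequences of naturals in which the leaf of `l` is the set of
points whose code under `φ` has `l` as an initial segment. -/
def ofCoding (φ : X → ℕ → ℕ) : FoliageTree X where
  Node := List ℕ
  lt := seqLT
  lt_irrefl _ h := h.2 rfl
  lt_trans := seqLT.trans
  wellOrdered := isWellOrder_seqLT_initial
  leaf l := {x | initSeg (φ x) l.length = l}

theorem isCoding_ofCoding (φ : X → ℕ → ℕ) : IsCoding (F := ofCoding φ) (RelIso.refl seqLT) φ :=
  fun _ => rfl

end FoliageTree

theorem IsPiCoding.isPiTree_ofCoding {X : Type*} [TopologicalSpace X] {φ : X ≃ (ℕ → ℕ)}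
    (hφ : IsPiCoding φ id) : (FoliageTree.ofCoding φ).IsPiTree := by
  have h := FoliageTree.isCoding_ofCoding φ
  refine ⟨h.isBaireFoliageTree hφ.continuous, (FoliageTree.growsInto_iff (RelIso.refl seqLT)).2 ?_⟩
  intro p U hU
  rw [h.rise_eq ⟨p, mem_of_mem_nhds hU⟩]
  exact hφ.exists_mem_stageFilter p U hU

theorem exists_strictMono_forall_eventually_mem {γ : Set (Set ℕ)} (hγ : γ.Countable)
    (hfip : HasFIP γ) (hIci : ∀ m, ∃ G ∈ γ, G ⊆ Ici m) :
    ∃ s : ℕ → ℕ, StrictMono s ∧ ∀ G ∈ γ, ∀ᶠ n in atTop, s n ∈ G := by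
  have : (generate γ).NeBot := generate_neBot_iff.2 fun δ hδ hfin => by
    rcases δ.eq_empty_or_nonempty with rfl | hne
    · simp
    · exact hfip δ hδ hfin hne
  have : (generate γ).IsCountablyGenerated := ⟨γ, hγ, rfl⟩
  have hle : generate γ ≤ atTop := le_iInf fun m => le_principal_iff.2 <| by
    obtain ⟨G, hG, hGm⟩ := hIci m
    exact mem_of_superset (mem_generate_of_mem hG) hGm
  obtain ⟨s, hs⟩ := exists_seq_tendsto (generate γ)
  obtain ⟨θ, hθ, hsθ⟩ := strictMono_subseq_of_tendsto_atTop (hs.mono_right hle)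
  exact ⟨s ∘ θ, hsθ,
    fun G hG => (hs.comp hθ.tendsto_atTop).eventually (mem_generate_of_mem hG)⟩

theorem FoliageTree.IsPiTree.exists_eventually_mem_stageFilter {X : Type*} [TopologicalSpace X]
    {F : FoliageTree X} (hF : F.IsPiTree) {γ : Set (Set ℕ)} (hγ : γ.Countable) (hfip : HasFIP γ)
    (href : PiRefines γ F.Rise) :
    ∃ (φ : X ≃ (ℕ → ℕ)) (s : ℕ → ℕ), Continuous φ ∧ StrictMono s ∧
      ∀ p, ∀ U ∈ 𝓝 p, ∀ᶠ n in atTop, U ∈ stageFilter φ id p (s n) := by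
  obtain ⟨φ, hφ, hrise⟩ := hF.exists_isPiCoding
  have hsub : ∀ p, ∀ U ∈ 𝓝 p, ∃ G ∈ γ, ∀ n ∈ G, U ∈ stageFilter φ id p n := fun p U hU => by
    obtain ⟨G, hG, -, hGU⟩ := href _ ⟨p, U, hU, (hrise p U hU).symm⟩
      (hφ.exists_mem_stageFilter p U hU)
    exact ⟨G, hG, hGU⟩
  have hIci : ∀ m, ∃ G ∈ γ, G ⊆ Ici m := fun m => by
    obtain ⟨G, hG, hGm⟩ := hsub (φ.symm 0) _ (preimage_cylinder_mem_nhds hφ.continuous _ m)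
    exact ⟨G, hG, fun n hn => le_of_preimage_cylinder_mem_stageFilter (hGm n hn)⟩
  obtain ⟨s, hs, hsγ⟩ := exists_strictMono_forall_eventually_mem hγ hfip hIci
  refine ⟨φ, s, hφ.continuous, hs, fun p U hU => ?_⟩
  obtain ⟨G, hG, hGU⟩ := hsub p U hU
  exact (hsγ G hG).mono fun n hn => hGU _ hn

section Reblocking

/-- The number of the block containing `i` when `ℕ` is cut into blocks starting at the values of
the strictly increasing sequence `s`; the numbers below `s 0` are put into block `0`. -/
def blockOf (s : ℕ → ℕ) (i : ℕ) : ℕ := Nat.findGreatest (fun n => s n ≤ i) i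

variable {s : ℕ → ℕ}

theorem blockOf_le_iff (hs : StrictMono s) {i n : ℕ} : blockOf s i ≤ n ↔ i < s (n + 1) := by
  refine ⟨fun h => ?_, fun h => ?_⟩
  · by_contra! hle
    exact Nat.findGreatest_is_greatest (Nat.lt_succ_of_le h) (hs.le_apply.trans hle) hle
  · by_contra! hlt
    have hspec : s (blockOf s i) ≤ i :=
      Nat.findGreatest_of_ne_zero (P := fun n => s n ≤ i) rfl hlt.ne_bot
    exact h.not_ge ((hs.monotone hlt).trans hspec)

theorem blockOf_apply (hs : StrictMono s) (n : ℕ) : blockOf s (s n) = n :=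
  eq_of_forall_ge_iff fun m => by rw [blockOf_le_iff hs, hs.lt_iff_lt, Nat.lt_succ_iff]

end Reblocking

section Flattening

theorem exists_equiv_nat_prod_nat {D : Type*} [Countable D] (μ : D → ℕ)
    (hμ : ∀ k, Infinite {d // μ d = k}) : ∃ ε : D ≃ ℕ × ℕ, ∀ d, (ε d).1 = μ d := by
  have e k : {d // μ d = k} ≃ ℕ := Classical.choice nonempty_equiv_of_countable
  exact ⟨(Equiv.sigmaFiberEquiv μ).symm.trans
    ((Equiv.sigmaCongrRight e).trans (Equiv.sigmaEquivProd ℕ ℕ)), fun _ => rfl⟩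

theorem exists_equiv_nat_prod_nat_fst_le (ι : Type*) [Finite ι] [Nonempty ι] :
    ∃ ε : (ι → ℕ) ≃ ℕ × ℕ, ∀ d i, (ε d).1 ≤ d i := by
  -- Taking the minimum alone as first component fails if `ι` has one element, as each value is then
  -- attained only once; the first component of its unpairing attains each value infinitely often.
  obtain ⟨ε, hε⟩ := exists_equiv_nat_prod_nat (fun d : ι → ℕ => (⨅ i, d i).unpair.1) fun k =>
    Infinite.of_injective (fun l => ⟨fun _ => Nat.pair k l, by simp⟩) fun l l' h => by
      simpa [funext_iff] using h
  refine ⟨ε, fun d i => ?_⟩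
  rw [hε]
  exact (Nat.unpair_left_le _).trans (ciInf_le (OrderBot.bddBelow _) i)

variable {I : Type*} {st : I → ℕ}

/-- Codes the coordinates at stage `n` by two numbers by means of `ε n`, and lists the two numbers
as entries `2 * n` and `2 * n + 1` of a sequence. -/
def flatten (ε : ∀ n, ({i // st i = n} → ℕ) ≃ ℕ × ℕ) : (I → ℕ) ≃ (ℕ → ℕ) :=
  (Equiv.arrowCongr (Equiv.sigmaFiberEquiv st).symm (Equiv.refl ℕ)).trans <|
  (Equiv.piCurry fun n (_ : {i // st i = n}) => ℕ).trans <|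
  (Equiv.piCongrRight ε).trans <|
  (Equiv.arrowProdEquivProdArrow ℕ (fun _ => ℕ) (fun _ => ℕ)).trans <|
  (Equiv.sumArrowEquivProdArrow ℕ ℕ ℕ).symm.trans <|
  Equiv.arrowCongr Equiv.natSumNatEquivNat (Equiv.refl ℕ)

variable (ε : ∀ n, ({i // st i = n} → ℕ) ≃ ℕ × ℕ)

theorem flatten_apply_natSumNatEquivNat (a : I → ℕ) (j : ℕ ⊕ ℕ) :
    flatten ε a (Equiv.natSumNatEquivNat j) =
      j.elim (fun n => (ε n fun i => a i).1) (fun n => (ε n fun i => a i).2) :=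
  congrArg _ (Equiv.natSumNatEquivNat.symm_apply_apply j)

theorem flatten_two_mul (a : I → ℕ) (n : ℕ) :
    flatten ε a (2 * n) = (ε n fun i => a i).1 :=
  flatten_apply_natSumNatEquivNat ε a (Sum.inl n)

theorem flatten_two_mul_add_one (a : I → ℕ) (n : ℕ) :
    flatten ε a (2 * n + 1) = (ε n fun i => a i).2 :=
  flatten_apply_natSumNatEquivNat ε a (Sum.inr n)

theorem continuous_flatten (hfin : ∀ n, Finite {i // st i = n}) : Continuous (flatten ε) := by
  have hε : ∀ n, Continuous fun a : I → ℕ => ε n fun i => a i := fun n =>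
    continuous_of_discreteTopology.comp (by fun_prop)
  refine continuous_pi fun j => ?_
  obtain ⟨n, rfl | rfl⟩ := j.even_or_odd'
  · simp only [flatten_two_mul]
    exact (hε n).fst
  · simp only [flatten_two_mul_add_one]
    exact (hε n).snd

theorem eq_of_flatten_mem_cylinder {a b : I → ℕ} {n : ℕ}
    (h : flatten ε a ∈ PiNat.cylinder (flatten ε b) (2 * n)) {i : I} (hi : st i < n) :
    a i = b i := by
  have hfst := h (2 * st i) (by lia)
  have hsnd := h (2 * st i + 1) (by lia)
  rw [flatten_two_mul, flatten_two_mul] at hfst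
  rw [flatten_two_mul_add_one, flatten_two_mul_add_one] at hsnd
  exact congrFun ((ε (st i)).injective (Prod.ext hfst hsnd)) ⟨i, rfl⟩

theorem IsPiCoding.exists_isPiCoding_id {X : Type*} [TopologicalSpace X] {c : X ≃ (I → ℕ)}
    (hc : IsPiCoding c st) (hfin : ∀ n, Finite {i // st i = n}) (hst : Function.Surjective st) :
    ∃ φ : X ≃ (ℕ → ℕ), IsPiCoding φ id := by
  have : ∀ n, Nonempty {i // st i = n} := fun n => nonempty_subtype.2 (hst n)
  choose ε hε using fun n => exists_equiv_nat_prod_nat_fst_le {i // st i = n}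
  refine ⟨c.trans (flatten ε), (continuous_flatten ε hfin).comp hc.continuous, fun p U hU => ?_⟩
  obtain ⟨n, m, hm⟩ := hc.exists_mem_stageFilter p U hU
  refine ⟨2 * n, mem_stageFilter_id_iff.2 ⟨m, fun x hx hmx => hm x (fun i hi => ?_) ?_⟩⟩
  · exact eq_of_flatten_mem_cylinder ε hx hi
  · rintro i rfl
    rw [Equiv.trans_apply, flatten_two_mul] at hmx
    exact hmx.trans (hε _ _ ⟨i, rfl⟩)

end Flattening

section Product

variable {A : Type*} {X : A → Type*} {Y : Type*}

/-- The coding of the points of `Y × ∏ a, X a` by functions on `ℕ ⊕ A × ℕ` which puts together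
codings of the factors. -/
def prodCoding (φ : Y ≃ (ℕ → ℕ)) (χ : ∀ a, X a ≃ (ℕ → ℕ)) :
    Y × (∀ a, X a) ≃ (ℕ ⊕ A × ℕ → ℕ) :=
  (φ.prodCongr ((Equiv.piCongrRight χ).trans (Equiv.curry A ℕ ℕ).symm)).trans
    (Equiv.sumArrowEquivProdArrow ℕ (A × ℕ) ℕ).symm

/-- The stages of the coordinates of `prodCoding`: a coordinate of `Y` is its own stage, while the
`n`-th block of coordinates of `X a`, cut at the values of `s a`, is put into stage
`max (e a) n`. The delay by `e a` is there to keep the stages finite. -/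
def prodStage (e : A → ℕ) (s : A → ℕ → ℕ) : ℕ ⊕ A × ℕ → ℕ :=
  Sum.elim id fun i => max (e i.1) (blockOf (s i.1) i.2)

variable (φ : Y ≃ (ℕ → ℕ)) (χ : ∀ a, X a ≃ (ℕ → ℕ)) {e : A → ℕ} {s : A → ℕ → ℕ}

theorem prodStage_surjective : Function.Surjective (prodStage e s) := fun n => ⟨Sum.inl n, rfl⟩

theorem finite_prodStage_eq (he : Function.Injective e) (hs : ∀ a, StrictMono (s a)) (n : ℕ) :
    Finite {i // prodStage e s i = n} := by
  have hle : {a | e a ≤ n}.Finite := (finite_Iic n).preimage he.injOn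
  refine (((finite_singleton n).image Sum.inl).union
    ((hle.biUnion fun a _ => (finite_Iio (s a (n + 1))).image (Prod.mk a)).image
      Sum.inr)).subset ?_
  rintro (i | ⟨a, i⟩) hi
  · exact Or.inl ⟨i, hi, rfl⟩
  · obtain ⟨hea, hblock⟩ := max_le_iff.1 (le_of_eq hi)
    exact Or.inr ⟨(a, i), mem_biUnion hea ⟨i, (blockOf_le_iff (hs a)).1 hblock, rfl⟩, rfl⟩

theorem tendsto_fst_stageFilter (n : ℕ) (z : Y × ∀ a, X a) :
    Tendsto Prod.fst (stageFilter (prodCoding φ χ) (prodStage e s) z n)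
      (stageFilter φ id z.1 n) :=
  tendsto_stageFilter (r := Sum.inl) (fun _ _ => rfl) (fun _ => id) (fun _ => id) z

theorem tendsto_snd_apply_stageFilter {a : A} (hs : StrictMono (s a)) {n : ℕ} (hn : e a < n)
    (z : Y × ∀ a, X a) :
    Tendsto (fun w => w.2 a) (stageFilter (prodCoding φ χ) (prodStage e s) z n)
      (stageFilter (χ a) id (z.2 a) (s a n)) := by
  refine tendsto_stageFilter (r := fun i => Sum.inr (a, i)) (fun _ _ => rfl)
    (fun i hi => max_lt hn ?_) (fun i hi => ?_) z
  · obtain ⟨n, rfl⟩ := Nat.exists_eq_add_one_of_ne_zero hn.ne_bot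
    exact Nat.lt_succ_of_le ((blockOf_le_iff hs).2 hi)
  · obtain rfl : i = s a n := hi
    simpa [prodStage, blockOf_apply hs] using hn.le

variable {φ χ} [TopologicalSpace Y] [∀ a, TopologicalSpace (X a)]

theorem continuous_prodCoding (hφ : Continuous φ) (hχ : ∀ a, Continuous (χ a)) :
    Continuous (prodCoding φ χ) := by
  refine continuous_pi ?_
  rintro (i | ⟨a, i⟩)
  · exact (continuous_apply i).comp (hφ.comp continuous_fst)
  · exact (continuous_apply i).comp ((hχ a).comp ((continuous_apply a).comp continuous_snd))

theorem isPiCoding_prodCoding (hφ : IsPiCoding φ id) (hχ : ∀ a, Continuous (χ a))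
    (hs : ∀ a, StrictMono (s a))
    (hχs : ∀ a p, ∀ U ∈ 𝓝 p, ∀ᶠ n in atTop, U ∈ stageFilter (χ a) id p (s a n)) :
    IsPiCoding (prodCoding φ χ) (prodStage e s) := by
  refine ⟨continuous_prodCoding hφ.continuous hχ, fun z U hU => ?_⟩
  obtain ⟨V, hV, W, hW, hVW⟩ := mem_nhds_prod_iff.1 hU
  rw [nhds_pi, Filter.mem_pi] at hW
  obtain ⟨T, hT, N, hN, hNW⟩ := hW
  have hX : ∀ᶠ n in atTop, ∀ a ∈ T,
      (fun w : Y × ∀ a, X a => w.2 a) ⁻¹' N a ∈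
        stageFilter (prodCoding φ χ) (prodStage e s) z n :=
    (eventually_all_finite hT).2 fun a _ => by
      filter_upwards [hχs a _ _ (hN a), eventually_gt_atTop (e a)] with n hn hen
      exact tendsto_snd_apply_stageFilter φ χ (hs a) hen z hn
  obtain ⟨n, hVn, hXn⟩ := ((hφ.frequently_mem_stageFilter z.1 hV).and_eventually hX).exists
  refine ⟨n, ?_⟩
  filter_upwards [tendsto_fst_stageFilter φ χ n z hVn, (biInter_mem hT).2 hXn] with w hwV hwX
  exact hVW ⟨hwV, hNW (by simpa [Set.mem_pi] using hwX)⟩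

end Product

theorem product_with_FIP_piTree_space_has_piTree_general
    {A : Type*} [Countable A]
    {X : A → Type*} [∀ a, TopologicalSpace (X a)]
    (F : ∀ a, FoliageTree (X a)) (hF : ∀ a, (F a).IsPiTree)
    (hγ : ∀ a, ∃ γ : Set (Set ℕ), γ.Countable ∧ HasFIP γ ∧ PiRefines γ ((F a).Rise))
    {Y : Type*} [TopologicalSpace Y] (G : FoliageTree Y) (hG : G.IsPiTree) :
    ∃ H : FoliageTree (Y × ∀ a, X a), H.IsPiTree := by
  obtain ⟨φ, hφ, -⟩ := hG.exists_isPiCoding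
  choose γ hcount hfip href using hγ
  choose χ s hχ hs hχs using fun a =>
    (hF a).exists_eventually_mem_stageFilter (hcount a) (hfip a) (href a)
  obtain ⟨e, he⟩ := exists_injective_nat A
  obtain ⟨θ, hθ⟩ := (isPiCoding_prodCoding hφ hχ hs hχs).exists_isPiCoding_id
    (finite_prodStage_eq he hs) prodStage_surjective
  exact ⟨FoliageTree.ofCoding θ, hθ.isPiTree_ofCoding⟩

/-- Theorem 2(b) of the paper. -/
theorem product_with_FIP_piTree_space_has_piTree
    {A : Type} [Countable A] [Nonempty A]
    {X : A → Type u} [∀ a, TopologicalSpace (X a)]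
    (F : ∀ a, FoliageTree (X a)) (hF : ∀ a, (F a).IsPiTree)
    (hγ : ∀ a, ∃ γ : Set (Set ℕ), γ.Countable ∧ HasFIP γ ∧ PiRefines γ ((F a).Rise))
    {Y : Type u} [TopologicalSpace Y] (G : FoliageTree Y) (hG : G.IsPiTree)
    (hGFIP : HasFIP G.Rise) :
    ∃ H : FoliageTree (Y × ∀ a, X a), H.IsPiTree := by
  exact product_with_FIP_piTree_space_has_piTree_general F hF hγ G hG
end

section
/- Suppose that F is a Baire foliage tree on a topological space X and A ⊆ X is at most countable. Then there exists a Baire foliage tree H on the subspace X \ A such that for every p ∈ X \ A there is a strictly increasing function f_p : ω → ω with the property: {2n+1 : n ∈ ω and f_p(n) ∈ rise_F(p,U)} ⊆ rise_H(p, U \ A) for every neighbourhood U of p in X. -/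
open Set

universe u v

/-!
A Baire foliage tree on `X` amounts to a continuous bijection of `X` onto the Baire space `ℕ → ℕ`,
the leaves being the preimages of the cylinders. So it suffices to rearrange the cylinders after
removing compact sets `K 0, K 1, …` from `ℕ → ℕ`, and `K n` is disposed of between the heights `2n`
and `2n + 2`. Let the new node of height `2n` have the cylinder of `w` as its leaf. If this cylinder
meets `K n`, each of its points outside `K n` runs through a last node `c` whose cylinder meets
`K n`; the points with the same `c` form the leaf of a son, of height `2n + 1`. The sons of that son
are the cylinders of the old sons of `c` that miss `K n`; there are infinitely many of these because
`K n` is compact. Hence a set that contains almost all leaves of old sons of `c` contains almost all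
leaves of its new sons, which gives the inclusion of the rises at odd heights.
-/

section Lists

open PiNat

variable {α : Type*} {a b c : List α}

/-- The extension order on finite sequences that are listed with the most recent entry first, as
in `PiNat.res`. Reversal carries it to `seqLT`. -/
def StrictSuffix (a b : List α) : Prop := a <:+ b ∧ a ≠ b

namespace StrictSuffix

theorem length_lt (h : StrictSuffix a b) : a.length < b.length :=
  h.1.length_le.lt_of_ne fun hl => h.2 (h.1.eq_of_length hl)

theorem of_suffix_of_length_lt (h : a <:+ b) (hl : a.length < b.length) : StrictSuffix a b :=
  ⟨h, fun hab => hl.ne (congrArg List.length hab)⟩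

theorem trans (hab : StrictSuffix a b) (hbc : StrictSuffix b c) : StrictSuffix a c :=
  of_suffix_of_length_lt (hab.1.trans hbc.1) (hab.length_lt.trans hbc.length_lt)

theorem cons_right_iff {n : α} : StrictSuffix a (n :: b) ↔ a <:+ b := by
  refine ⟨fun h => (List.suffix_cons_iff.1 h.1).resolve_left h.2, fun h => ?_⟩
  exact of_suffix_of_length_lt (h.trans (List.suffix_cons n b)) (Nat.lt_succ_of_le h.length_le)

theorem exists_cons_suffix (h : StrictSuffix a b) : ∃ n, n :: a <:+ b := by
  obtain ⟨⟨t, rfl⟩, hne⟩ := h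
  obtain rfl | ⟨s, n, rfl⟩ := t.eq_nil_or_concat
  · exact absurd rfl hne
  · exact ⟨n, s, by simp⟩

theorem isSon_iff :
    (StrictSuffix a b ∧ ¬ ∃ t, StrictSuffix a t ∧ StrictSuffix t b) ↔ ∃ n, b = n :: a := by
  constructor
  · rintro ⟨hab, hno⟩
    obtain ⟨n, hn⟩ := hab.exists_cons_suffix
    refine ⟨n, by_contra fun hne => hno ⟨n :: a, cons_right_iff.2 List.suffix_rfl, hn, Ne.symm hne⟩⟩
  · rintro ⟨n, rfl⟩
    exact ⟨cons_right_iff.2 List.suffix_rfl, fun ⟨t, hat, htn⟩ =>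
      hat.length_lt.not_ge (cons_right_iff.1 htn).length_le⟩

theorem comparable_iff :
    (StrictSuffix a b ∨ a = b ∨ StrictSuffix b a) ↔ (a <:+ b ∨ b <:+ a) := by
  constructor
  · rintro (h | rfl | h)
    exacts [.inl h.1, .inl List.suffix_rfl, .inr h.1]
  · intro h
    rcases eq_or_ne a b with hab | hab
    · exact .inr (.inl hab)
    · exact h.imp (⟨·, hab⟩) fun h => .inr ⟨h, hab.symm⟩

theorem isWellOrder_predecessors (a : List α) :
    IsWellOrder {b : List α // StrictSuffix b a} fun x y => StrictSuffix x.1 y.1 where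
  wf := Subrelation.wf (fun h => length_lt h)
    (measure fun x : {b // StrictSuffix b a} => x.1.length).wf
  trichotomous x y hxy hyx := Subtype.ext <| by
    have := comparable_iff.2 (List.suffix_or_suffix_of_suffix x.2.1 y.2.1)
    tauto

theorem isChain_iff {C : Set (List α)} :
    IsChain StrictSuffix C ↔ ∀ a ∈ C, ∀ b ∈ C, a <:+ b ∨ b <:+ a := by
  refine forall₂_congr fun a _ => forall₂_congr fun b _ => ?_
  rw [← comparable_iff]
  tauto

end StrictSuffix

theorem exists_forall_res {P : List α → Prop} (nil : P [])
    (cons : ∀ l, P l → ∃ a, P (a :: l)) : ∃ x : ℕ → α, ∀ n, P (res x n) := by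
  have : Nonempty α := (cons [] nil).nonempty
  choose! next hnext using cons
  let l : ℕ → List α := fun n => n.rec [] fun _ l => next l :: l
  have hl : ∀ n, res (fun n => next (l n)) n = l n := by
    intro n
    induction n with
    | zero => rfl
    | succ n ih => rw [res_succ, ih]
  refine ⟨fun n => next (l n), fun n => ?_⟩
  induction n with
  | zero => exact nil
  | succ n ih => rw [hl] at ih ⊢; exact hnext _ ih

theorem res_suffix_res (x : ℕ → α) {m n : ℕ} (h : m ≤ n) : res x m <:+ res x n :=
  Nat.rel_of_forall_rel_succ_of_le (· <:+ ·) (fun n => List.suffix_cons (x n) (res x n)) h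

namespace StrictSuffix

theorem isMaxChain_range_res (x : ℕ → α) : IsMaxChain StrictSuffix (range (res x)) := by
  refine ⟨isChain_iff.2 ?_, fun C hC hsub => hsub.antisymm fun a ha => ⟨a.length, ?_⟩⟩
  · rintro _ ⟨m, rfl⟩ _ ⟨n, rfl⟩
    exact (le_total m n).imp (res_suffix_res x) (res_suffix_res x)
  · obtain h | h := isChain_iff.1 hC a ha _ (hsub ⟨a.length, rfl⟩)
    · exact (h.eq_of_length (res_length x _).symm).symm
    · exact h.eq_of_length (res_length x _)

theorem mem_of_isMaxChain {C : Set (List α)} (hC : IsMaxChain StrictSuffix C)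
    (ha : ∀ b ∈ C, a <:+ b ∨ b <:+ a) : a ∈ C := by
  have hinsert : IsChain StrictSuffix (insert a C) :=
    hC.1.insert fun b hb hab => (ha b hb).imp (⟨·, hab⟩) (⟨·, hab.symm⟩)
  rw [hC.2 hinsert (subset_insert a C)]
  exact mem_insert a C

theorem exists_cons_mem_of_isMaxChain [Nonempty α] {C : Set (List α)}
    (hC : IsMaxChain StrictSuffix C) (ha : a ∈ C) : ∃ n, n :: a ∈ C := by
  have hchain := isChain_iff.1 hC.1
  by_cases h : ∃ b ∈ C, StrictSuffix a b
  · obtain ⟨b, hb, hab⟩ := h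
    obtain ⟨n, hn⟩ := hab.exists_cons_suffix
    refine ⟨n, mem_of_isMaxChain hC fun c hc => ?_⟩
    obtain hbc | hcb := hchain b hb c hc
    · exact .inl (hn.trans hbc)
    · exact List.suffix_or_suffix_of_suffix hn hcb
  · obtain ⟨n⟩ := ‹Nonempty α›
    refine ⟨n, mem_of_isMaxChain hC fun c hc => .inr ?_⟩
    obtain hac | hca := hchain a ha c hc
    · rw [← of_not_not fun hne => h ⟨c, hc, hac, hne⟩]
      exact List.suffix_cons n a
    · exact hca.trans (List.suffix_cons n a)

theorem isMaxChain_iff [Nonempty α] {C : Set (List α)} :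
    IsMaxChain StrictSuffix C ↔ ∃ x : ℕ → α, C = range (res x) := by
  refine ⟨fun hC => ?_, fun ⟨x, hx⟩ => hx ▸ isMaxChain_range_res x⟩
  obtain ⟨x, hx⟩ := exists_forall_res
    (mem_of_isMaxChain hC fun b _ => .inl (List.nil_suffix (l := b)))
    fun l => exists_cons_mem_of_isMaxChain hC
  exact ⟨x, ((isMaxChain_range_res x).2 hC.1 (range_subset_iff.2 hx)).symm⟩

end StrictSuffix

/-- Reversal of finite sequences, as an isomorphism between the two listings of `ω^{<ω}`. -/
def strictSuffixIsoSeqLT : (StrictSuffix (α := ℕ)) ≃r seqLT where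
  toEquiv := List.reverse_involutive.toPerm
  map_rel_iff' := by simp [StrictSuffix, seqLT]

end Lists

section Cylinders

open PiNat

variable {α : Type*} {l l' : List α} {x : ℕ → α}

/-- The sequences with initial segment `l`, listed with the most recent entry first. Unlike
`PiNat.cylinder`, it is indexed by the segment instead of by a sequence passing through it. -/
def listCylinder (l : List α) : Set (ℕ → α) := {x | res x l.length = l}

theorem mem_listCylinder : x ∈ listCylinder l ↔ res x l.length = l := Iff.rfl

theorem listCylinder_nil : listCylinder ([] : List α) = univ :=
  eq_univ_of_forall fun _ => mem_listCylinder.2 rfl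

theorem mem_listCylinder_res {y : ℕ → α} {n : ℕ} :
    x ∈ listCylinder (res y n) ↔ res x n = res y n := by
  rw [mem_listCylinder, res_length]

theorem listCylinder_res (y : ℕ → α) (n : ℕ) : listCylinder (res y n) = cylinder y n := by
  ext x
  rw [mem_listCylinder_res, cylinder_eq_res, mem_ofPred_eq]

theorem mem_listCylinder_cons {a : α} :
    x ∈ listCylinder (a :: l) ↔ x l.length = a ∧ x ∈ listCylinder l := by
  simp only [mem_listCylinder, List.length_cons, res_succ, List.cons.injEq]

theorem listCylinder_anti (h : l <:+ l') : listCylinder l' ⊆ listCylinder l := by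
  obtain ⟨t, rfl⟩ := h
  induction t with
  | nil => exact subset_rfl
  | cons a t ih => exact fun x hx => ih (mem_listCylinder_cons.1 hx).2

theorem listCylinder_nonempty [Nonempty α] (l : List α) : (listCylinder l).Nonempty := by
  induction l with
  | nil => exact ⟨fun _ => Classical.arbitrary α, rfl⟩
  | cons a l ih =>
    obtain ⟨x, hx⟩ := ih
    refine ⟨Function.update x l.length a, mem_listCylinder_cons.2 ⟨by simp, ?_⟩⟩
    rw [mem_listCylinder, ← mem_listCylinder.1 hx, res_length]
    exact res_eq_res.2 fun m hm => Function.update_of_ne hm.ne _ _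

theorem iInter_listCylinder_res (x : ℕ → α) : ⋂ n, listCylinder (res x n) = {x} := by
  ext y
  simp only [mem_iInter, mem_listCylinder_res, mem_singleton_iff, ← funext_iff]
  exact res_injective.eq_iff

theorem exists_iInter_listCylinder_eq_singleton {w : ℕ → List α}
    (hw : ∀ n, StrictSuffix (w n) (w (n + 1))) : ∃ x, ⋂ n, listCylinder (w n) = {x} := by
  have mono : ∀ {m n : ℕ}, m ≤ n → w m <:+ w n := fun hmn =>
    Nat.rel_of_forall_rel_succ_of_le (· <:+ ·) (fun n => (hw n).1) hmn
  have extend : ∀ l, (∃ n, l <:+ w n) → ∃ a, ∃ n, a :: l <:+ w n := by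
    rintro l ⟨n, hl⟩
    have hlt := StrictSuffix.of_suffix_of_length_lt (hl.trans (hw n).1)
      (hl.length_le.trans_lt (hw n).length_lt)
    obtain ⟨a, ha⟩ := hlt.exists_cons_suffix
    exact ⟨a, n + 1, ha⟩
  obtain ⟨x, hx⟩ := exists_forall_res ⟨0, List.nil_suffix⟩ extend
  refine ⟨x, Subset.antisymm ?_ ?_⟩
  · rw [← iInter_listCylinder_res x]
    refine subset_iInter fun n => ?_
    obtain ⟨m, hm⟩ := hx n
    exact (iInter_subset _ m).trans (listCylinder_anti hm)
  · rw [singleton_subset_iff, mem_iInter]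
    intro n
    obtain ⟨m, hm⟩ := hx (w n).length
    exact (List.suffix_of_suffix_length_le (hm.trans (mono (le_max_right n m)))
      (mono (le_max_left n m)) (res_length x _).le).eq_of_length (res_length x _)

theorem continuous_iff_isOpen_preimage_listCylinder [TopologicalSpace α] [DiscreteTopology α]
    {Y : Type*} [TopologicalSpace Y] {φ : Y → ℕ → α} :
    Continuous φ ↔ ∀ l, IsOpen (φ ⁻¹' listCylinder l) := by
  refine ⟨fun hφ l => ?_, fun h => ?_⟩
  · induction l with
    | nil => exact (listCylinder_nil (α := α)).symm ▸ isOpen_univ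
    | cons a l ih =>
      have hcoord : Continuous fun y => φ y l.length := by fun_prop
      convert ((isOpen_discrete {a}).preimage hcoord).inter ih
      ext y
      exact mem_listCylinder_cons
  · refine (isTopologicalBasis_cylinders fun _ : ℕ => α).continuous_iff.2 ?_
    rintro _ ⟨x, n, rfl⟩
    exact listCylinder_res x n ▸ h (res x n)

theorem isOpen_listCylinder [TopologicalSpace α] [DiscreteTopology α] (l : List α) :
    IsOpen (listCylinder l) :=
  continuous_iff_isOpen_preimage_listCylinder.1 continuous_id l

end Cylinders

section Schemes

open PiNat

variable {Y : Type*} {L : List ℕ → Set Y}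

/-- The leaf assignments of Baire foliage trees, with the topology left out and nodes listed with
the most recent entry first, as in Mathlib's `CantorScheme`. -/
structure IsBaireScheme (L : List ℕ → Set Y) : Prop where
  root : L [] = univ
  iUnion_cons : ∀ l, ⋃ n, L (n :: l) = L l
  disjoint : CantorScheme.Disjoint L
  branch : ∀ x : ℕ → ℕ, ∃ p, ⋂ n, L (res x n) = {p}

namespace IsBaireScheme

theorem eq_of_mem_of_length_eq (hL : IsBaireScheme L) {p : Y} :
    ∀ {l l' : List ℕ}, p ∈ L l → p ∈ L l' → l.length = l'.length → l = l'
  | [], l', _, _, hlen => (List.length_eq_zero_iff.1 hlen.symm).symm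
  | _ :: _, [], _, _, hlen => absurd hlen (Nat.succ_ne_zero _)
  | n :: l, n' :: l', hp, hp', hlen => by
    have antitone : ∀ n l, L (n :: l) ⊆ L l := fun n l =>
      (subset_iUnion (fun n => L (n :: l)) n).trans_eq (hL.iUnion_cons l)
    obtain rfl : l = l' := hL.eq_of_mem_of_length_eq (antitone n l hp) (antitone n' l' hp')
      (Nat.succ_injective hlen)
    rw [of_not_not fun hne => disjoint_left.1 (hL.disjoint l hne) hp hp']

theorem exists_equiv (hL : IsBaireScheme L) :
    ∃ φ : Y ≃ (ℕ → ℕ), ∀ l, L l = φ ⁻¹' listCylinder l := by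
  have exists_code (p : Y) : ∃ x, ∀ n, p ∈ L (res x n) :=
    exists_forall_res (P := (p ∈ L ·)) (hL.root ▸ mem_univ p) fun l hp =>
      mem_iUnion.1 ((hL.iUnion_cons l).symm ▸ hp)
  choose φ hφ using exists_code
  have hbij : Function.Bijective φ := by
    refine ⟨fun p q hpq => ?_, fun x => ?_⟩
    · obtain ⟨r, hr⟩ := hL.branch (φ p)
      have hp : p = r := hr.subset (mem_iInter.2 (hφ p))
      have hq : q = r := hr.subset (mem_iInter.2 (hpq ▸ hφ q))
      rw [hp, hq]
    · obtain ⟨p, hp⟩ := hL.branch x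
      have hpx := mem_iInter.1 (hp.superset rfl)
      refine ⟨p, res_injective (funext fun n => ?_)⟩
      exact hL.eq_of_mem_of_length_eq (hφ p n) (hpx n) (by simp only [res_length])
  refine ⟨.ofBijective φ hbij, fun l => Set.ext fun p => ⟨fun hp => ?_, fun hp => ?_⟩⟩
  · exact hL.eq_of_mem_of_length_eq (hφ p _) hp (res_length _ _)
  · rw [← mem_listCylinder.1 hp]
    exact hφ p _

theorem of_equiv (φ : Y ≃ (ℕ → ℕ)) : IsBaireScheme fun l => φ ⁻¹' listCylinder l where
  root := by rw [listCylinder_nil, preimage_univ]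
  iUnion_cons l := by
    ext p
    simp only [mem_iUnion, mem_preimage, mem_listCylinder_cons, exists_and_right, exists_eq',
      true_and]
  disjoint l n n' hne := disjoint_left.2 fun p hp hp' =>
    hne ((mem_listCylinder_cons.1 hp).1.symm.trans (mem_listCylinder_cons.1 hp').1)
  branch x := ⟨φ.symm x, by
    rw [← preimage_iInter, iInter_listCylinder_res, φ.preimage_eq_iff_eq_image, image_singleton,
      φ.apply_symm_apply]⟩

end IsBaireScheme

end Schemes

namespace FoliageTree

open PiNat Filter

variable {X : Type u} {F : FoliageTree X}

theorem isBranch_iff_isMaxChain {B : Set F.Node} : F.IsBranch B ↔ IsMaxChain F.lt B := by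
  have hchain : ∀ C : Set F.Node, F.IsChainN C ↔ IsChain F.lt C := fun C => by
    refine forall₂_congr fun a _ => forall₂_congr fun b _ => ?_
    tauto
  simp only [IsBranch, IsMaxChain, hchain]

section Skeleton

variable (e : F.lt ≃r (StrictSuffix (α := ℕ)))

theorem not_isMaxNode_s7 (l : List ℕ) : ¬ F.IsMaxNode (e.symm l) :=
  not_not.2 ⟨e.symm (0 :: l),
    e.symm.map_rel_iff.2 (StrictSuffix.cons_right_iff.2 List.suffix_rfl)⟩

theorem symm_cons_injective (l : List ℕ) : Function.Injective fun n => e.symm (n :: l) :=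
  fun _ _ h => List.head_eq_of_cons_eq (RelIso.injective e.symm h)

theorem sons_eq_range_s7 (l : List ℕ) : F.Sons (e.symm l) = range fun n => e.symm (n :: l) := by
  ext v
  obtain ⟨l', rfl⟩ := (RelIso.surjective e.symm) v
  have hson : e.symm l' ∈ F.Sons (e.symm l) ↔
      StrictSuffix l l' ∧ ¬ ∃ t, StrictSuffix l t ∧ StrictSuffix t l' := by
    simp only [Sons, mem_ofPred_eq, ← e.symm.map_rel_iff]
    rw [(RelIso.surjective e.symm).exists]
  rw [hson, StrictSuffix.isSon_iff]
  simp only [mem_range, (RelIso.injective e.symm).eq_iff, eq_comm]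

theorem isRoot_symm_nil : F.IsRoot (e.symm []) := by
  intro v
  obtain ⟨l, rfl⟩ := (RelIso.surjective e.symm) v
  rw [(RelIso.injective e.symm).eq_iff, e.symm.map_rel_iff]
  exact or_iff_not_imp_left.2 fun hne => ⟨List.nil_suffix, hne⟩

theorem IsRoot.eq {r s : F.Node} (hr : F.IsRoot r) (hs : F.IsRoot s) : r = s :=
  (hr s).resolve_right fun hrs => (hs r).elim (fun h => F.lt_irrefl r (h ▸ hrs))
    fun hsr => F.lt_irrefl r (F.lt_trans hrs hsr)

theorem isBranch_iff_s7 {B : Set F.Node} :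
    F.IsBranch B ↔ ∃ x : ℕ → ℕ, B = range fun n => e.symm (res x n) := by
  have himage : IsMaxChain F.lt B ↔ IsMaxChain StrictSuffix (e '' B) :=
    ⟨fun h => h.image e, fun h => by
      simpa only [image_image, e.symm_apply_apply, image_id'] using h.image e.symm⟩
  rw [isBranch_iff_isMaxChain, himage, StrictSuffix.isMaxChain_iff]
  refine exists_congr fun x => ⟨fun h => ?_, ?_⟩
  · rw [range_comp' e.symm, ← h]
    simp only [image_image, e.symm_apply_apply, image_id']
  · rintro rfl
    rw [← range_comp]
    simp only [Function.comp_def, e.apply_symm_apply]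

theorem height_eq_length_s7 (l : List ℕ) : F.height (e.symm l) = l.length := by
  have := F.wellOrdered (e.symm l)
  have hlt : ∀ {b}, F.lt b (e.symm l) ↔ StrictSuffix (e b) l := fun {b} => by
    rw [← e.map_rel_iff, e.apply_symm_apply]
  let f : (fun b c : {b // F.lt b (e.symm l)} => F.lt b.1 c.1) ↪r
      ((· < ·) : Fin l.length → Fin l.length → Prop) :=
    RelEmbedding.ofMonotone (fun b => ⟨(e b.1).length, (hlt.1 b.2).length_lt⟩)
      fun b c hbc => (e.map_rel_iff.2 hbc).length_lt
  have hf : Function.Surjective f := fun n => by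
    have hlen : (l.drop (l.length - n)).length = n := by
      rw [List.length_drop]
      omega
    refine ⟨⟨e.symm (l.drop (l.length - n)), ?_⟩, ?_⟩
    · rw [hlt, e.apply_symm_apply]
      exact .of_suffix_of_length_lt (List.drop_suffix _ _) (hlen.trans_lt n.2)
    · refine Fin.ext ?_
      simp only [f, RelEmbedding.ofMonotone_coe, e.apply_symm_apply, hlen]
  rw [height, ← Ordinal.type_fin]
  exact Ordinal.type_eq.2 ⟨.ofSurjective f hf⟩

theorem isBaireScheme_iff : IsBaireScheme (fun l => F.leaf (e.symm l)) ↔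
    F.LocallyStrict ∧ F.StrictBranches ∧ ∃ r, F.IsRoot r ∧ F.leaf r = univ := by
  constructor
  · intro h
    refine ⟨fun v _ => ?_, ⟨⟨e.symm []⟩, ?_⟩, e.symm [], isRoot_symm_nil e, h.root⟩
    · obtain ⟨l, rfl⟩ := (RelIso.surjective e.symm) v
      rw [sons_eq_range_s7, biUnion_range, forall_mem_range]
      refine ⟨(h.iUnion_cons l).symm, fun m => forall_mem_range.2 fun n hmn => ?_⟩
      exact h.disjoint l fun h => hmn (h ▸ rfl)
    · rintro _ hB
      obtain ⟨x, rfl⟩ := (isBranch_iff_s7 e).1 hB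
      simpa only [biInter_range] using h.branch x
  · rintro ⟨hstrict, ⟨-, hbranch⟩, r, hr, hleaf⟩
    have hson := fun l => hstrict (e.symm l) (not_isMaxNode_s7 e l)
    simp only [sons_eq_range_s7, biUnion_range, forall_mem_range] at hson
    refine ⟨hr.eq (isRoot_symm_nil e) ▸ hleaf, fun l => (hson l).1.symm, fun l m n hmn => ?_,
      fun x => ?_⟩
    · exact (hson l).2 m n ((symm_cons_injective e l).ne hmn)
    · simpa only [biInter_range] using hbranch _ ((isBranch_iff_s7 e).2 ⟨x, rfl⟩)

theorem piRefines_shoot_iff {l : List ℕ} {U : Set X}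
    (hne : ∀ n, (F.leaf (e.symm (n :: l))).Nonempty) :
    PiRefines (F.shoot (e.symm l)) {U} ↔
      (U.Nonempty → ∀ᶠ n in cofinite, F.leaf (e.symm (n :: l)) ⊆ U) := by
  have hinj := symm_cons_injective e l
  simp only [PiRefines, mem_singleton_iff, forall_eq, shoot, sons_eq_range_s7]
  refine imp_congr_right fun _ => ⟨?_, fun h => ?_⟩
  · rintro ⟨_, ⟨C, -, hC, rfl⟩, -, hCU⟩
    refine (hC.preimage hinj.injOn).subset fun n hn => ⟨mem_range_self n, fun hnC => hn ?_⟩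
    exact (subset_biUnion_of_mem hnC).trans hCU
  · obtain ⟨n, hn⟩ := h.exists
    refine ⟨_, ⟨(fun n => e.symm (n :: l)) '' {n | F.leaf (e.symm (n :: l)) ⊆ U},
      image_subset_range _ _, ?_, rfl⟩, ?_, ?_⟩
    · rw [← image_univ, ← image_sdiff hinj, ← compl_eq_univ_sdiff]
      exact h.image _
    · exact (hne n).mono (subset_biUnion_of_mem (mem_image_of_mem _ hn))
    · simp only [biUnion_image]
      exact iUnion₂_subset fun n hn => hn

end Skeleton

/-- `F` is the tree of the preimages of the cylinders under `φ`. Baire foliage trees are the trees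
coded by a continuous bijection onto the Baire space. -/
def IsCodedBy (F : FoliageTree X) (φ : X → ℕ → ℕ) : Prop :=
  ∃ e : F.lt ≃r (StrictSuffix (α := ℕ)), ∀ l, F.leaf (e.symm l) = φ ⁻¹' listCylinder l

theorem isBaireFoliageTree_iff [TopologicalSpace X] :
    F.IsBaireFoliageTree ↔ ∃ φ : X ≃ (ℕ → ℕ), Continuous φ ∧ F.IsCodedBy φ := by
  constructor
  · rintro ⟨hopen, hstrict, ⟨e'⟩, hbranch, hroot⟩
    let e := e'.trans strictSuffixIsoSeqLT.symm
    obtain ⟨φ, hφ⟩ := ((isBaireScheme_iff e).2 ⟨hstrict, hbranch, hroot⟩).exists_equiv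
    refine ⟨φ, continuous_iff_isOpen_preimage_listCylinder.2 fun l => ?_, e, hφ⟩
    exact hφ l ▸ hopen _
  · rintro ⟨φ, hφ, e, he⟩
    obtain ⟨hstrict, hbranch, hroot⟩ := (isBaireScheme_iff e).1 <| by
      simpa only [he] using IsBaireScheme.of_equiv φ
    refine ⟨fun v => ?_, hstrict, ⟨e.trans strictSuffixIsoSeqLT⟩, hbranch, hroot⟩
    rw [← e.symm_apply_apply v, he]
    exact continuous_iff_isOpen_preimage_listCylinder.1 hφ _

/-- The tree of preimages of the cylinders under `φ`, with the finite sequences as nodes. -/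
def codeTree (φ : X → ℕ → ℕ) : FoliageTree X where
  Node := List ℕ
  lt := StrictSuffix
  lt_irrefl _ h := h.2 rfl
  lt_trans := StrictSuffix.trans
  wellOrdered := StrictSuffix.isWellOrder_predecessors
  leaf l := φ ⁻¹' listCylinder l

theorem isCodedBy_codeTree (φ : X → ℕ → ℕ) : (codeTree φ).IsCodedBy φ :=
  ⟨.refl _, fun _ => rfl⟩

theorem IsCodedBy.mem_rise_iff {φ : X → ℕ → ℕ} (hF : F.IsCodedBy φ)
    (hφ : Function.Surjective φ) {p : X} {U : Set X} {n : ℕ} :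
    n ∈ F.rise p U ↔
      (U.Nonempty → ∀ᶠ i in cofinite, φ ⁻¹' listCylinder (i :: res (φ p) n) ⊆ U) := by
  obtain ⟨e, he⟩ := hF
  have hshoot : ∀ l, PiRefines (F.shoot (e.symm l)) {U} ↔
      (U.Nonempty → ∀ᶠ i in cofinite, φ ⁻¹' listCylinder (i :: l) ⊆ U) := fun l => by
    rw [piRefines_shoot_iff e fun i => he _ ▸ (listCylinder_nonempty _).preimage hφ]
    simp only [he]
  rw [← hshoot]
  constructor
  · rintro ⟨v, hv, hUv, hn⟩
    obtain ⟨l, rfl⟩ := (RelIso.surjective e.symm) v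
    rw [height_eq_length_s7, Nat.cast_inj] at hn
    rw [scope, mem_ofPred_eq, he, mem_preimage, mem_listCylinder, hn] at hv
    rwa [hv]
  · refine fun h => ⟨_, ?_, h, by rw [height_eq_length_s7, res_length]⟩
    rw [scope, mem_ofPred_eq, he, mem_preimage, mem_listCylinder_res]

theorem IsCodedBy.mem_rise_of_preimage_subset {Y : Type v} {H : FoliageTree Y}
    {φ : X → ℕ → ℕ} {χ : Y → ℕ → ℕ} (hF : F.IsCodedBy φ) (hφ : Function.Surjective φ)
    (hH : H.IsCodedBy χ) (hχ : Function.Surjective χ) {g : Y → X} {q : Y} {m n : ℕ}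
    {j : ℕ → ℕ} (hj : Function.Injective j)
    (hsub : ∀ k, χ ⁻¹' listCylinder (k :: res (χ q) m) ⊆
      g ⁻¹' (φ ⁻¹' listCylinder (j k :: res (φ (g q)) n)))
    {U : Set X} (hn : n ∈ F.rise (g q) U) : m ∈ H.rise q (g ⁻¹' U) := by
  rw [hH.mem_rise_iff hχ]
  intro hU
  have hev := (hF.mem_rise_iff hφ).1 hn ((hU.image g).mono (image_preimage_subset g U))
  exact (hj.tendsto_cofinite.eventually hev).mono fun k hk => (hsub k).trans (preimage_mono hk)

end FoliageTree

section Exits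

open PiNat

variable {α : Type*} {K : Set (ℕ → α)} {c c' w : List α} {x : ℕ → α}

/-- The entries that lead from the node `c` to a cylinder missing `K`. -/
def exits (K : Set (ℕ → α)) (c : List α) : Set α := {i | Disjoint (listCylinder (i :: c)) K}

/-- The nodes at which points of `listCylinder w \ K` may part from `K`. If `listCylinder w` misses
`K` altogether, these are all the sons of `w`, so that there are infinitely many of them in any
case. -/
def branchNodes (K : Set (ℕ → α)) (w : List α) : Set (List α) :=
  {c | w <:+ c ∧ (listCylinder c ∩ K).Nonempty ∨
    Disjoint (listCylinder w) K ∧ ∃ i, c = i :: w}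

/-- The points that run through `c` and part from `K` there. -/
def leavingSet (K : Set (ℕ → α)) (c : List α) : Set (ℕ → α) :=
  {x ∈ listCylinder c | x c.length ∈ exits K c}

theorem suffix_of_mem_branchNodes (hc : c ∈ branchNodes K w) : w <:+ c := by
  obtain ⟨hwc, -⟩ | ⟨-, i, rfl⟩ := hc
  exacts [hwc, List.suffix_cons i w]

theorem infinite_branchNodes [Infinite α] (K : Set (ℕ → α)) (w : List α) :
    (branchNodes K w).Infinite := by
  by_cases h : Disjoint (listCylinder w) K
  · have hinj : Function.Injective fun i => i :: w := fun _ _ h => List.head_eq_of_cons_eq h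
    refine (infinite_range_of_injective hinj).mono ?_
    exact range_subset_iff.2 fun i => .inr ⟨h, i, rfl⟩
  · obtain ⟨x, hxw, hxK⟩ := not_disjoint_iff.1 h
    have hinj : Function.Injective (res x) := fun m n hmn => by
      rw [← res_length x m, hmn, res_length]
    refine ((Ici_infinite w.length).image hinj.injOn).mono ?_
    rintro _ ⟨n, hn, rfl⟩
    refine .inl ⟨?_, x, mem_listCylinder_res.2 rfl, hxK⟩
    rw [← mem_listCylinder.1 hxw]
    exact res_suffix_res x hn

theorem leavingSet_subset_listCylinder : leavingSet K c ⊆ listCylinder c := fun _ hx => hx.1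

theorem leavingSet_eq_biUnion : leavingSet K c = ⋃ i ∈ exits K c, listCylinder (i :: c) := by
  ext x
  simp only [leavingSet, mem_iUnion₂, mem_listCylinder_cons, mem_ofPred_eq]
  exact ⟨fun h => ⟨_, h.2, rfl, h.1⟩, fun ⟨_, hi, hx, hc⟩ => ⟨hc, hx ▸ hi⟩⟩

theorem disjoint_listCylinder_res_of_mem_leavingSet (hx : x ∈ leavingSet K c) {n : ℕ}
    (hn : c.length < n) : Disjoint (listCylinder (res x n)) K := by
  refine Disjoint.mono_left (listCylinder_anti ?_) hx.2
  rw [← mem_listCylinder.1 (mem_listCylinder_cons.2 ⟨rfl, hx.1⟩)]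
  exact res_suffix_res x hn

theorem disjoint_leavingSet (hc : c ∈ branchNodes K w) (hc' : c' ∈ branchNodes K w)
    (hne : c ≠ c') : Disjoint (leavingSet K c) (leavingSet K c') := by
  have length_le : ∀ {c c' x}, c ∈ branchNodes K w → c' ∈ branchNodes K w → x ∈ leavingSet K c →
      x ∈ leavingSet K c' → c'.length ≤ c.length := by
    rintro c c' x hc (⟨-, hmeet⟩ | ⟨hdisj, i, rfl⟩) hx hx'
    · refine not_lt.1 fun hlt => hmeet.not_disjoint ?_
      have := disjoint_listCylinder_res_of_mem_leavingSet hx hlt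
      rwa [mem_listCylinder.1 hx'.1] at this
    · obtain ⟨hwc, hmeet⟩ | ⟨-, j, rfl⟩ := hc
      · exact absurd (hdisj.mono_left (listCylinder_anti hwc)) hmeet.not_disjoint
      · rfl
  refine disjoint_left.2 fun x hx hx' => hne ?_
  rw [← mem_listCylinder.1 hx.1, ← mem_listCylinder.1 hx'.1,
    (length_le hc hc' hx hx').antisymm (length_le hc' hc hx' hx)]

section Topology

variable [TopologicalSpace α] [DiscreteTopology α]

theorem infinite_exits [Infinite α] (hK : IsCompact K) (c : List α) : (exits K c).Infinite := by
  have hfin : ((fun x => x c.length) '' K).Finite :=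
    (hK.image (continuous_apply c.length)).finite_of_discrete
  refine hfin.infinite_compl.mono fun i hi => disjoint_left.2 fun x hx hxK => ?_
  exact hi ⟨x, hxK, (mem_listCylinder_cons.1 hx).1⟩

theorem exists_mem_branchNodes_mem_leavingSet (hK : IsClosed K) (hxw : x ∈ listCylinder w)
    (hxK : x ∉ K) : ∃ c ∈ branchNodes K w, x ∈ leavingSet K c := by
  by_cases hdisj : Disjoint (listCylinder w) K
  · refine ⟨x w.length :: w, .inr ⟨hdisj, _, rfl⟩, mem_listCylinder_cons.2 ⟨rfl, hxw⟩, ?_⟩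
    refine hdisj.mono_left (listCylinder_anti ?_)
    exact (List.suffix_cons _ w).trans (List.suffix_cons _ _)
  · let p : ℕ → Prop := fun k => Disjoint (listCylinder (res x (w.length + k))) K
    have hp₀ : ¬ p 0 := by rwa [← mem_listCylinder.1 hxw] at hdisj
    have hp : ∃ k, p k := by
      obtain ⟨k, hk⟩ := exists_disjoint_cylinder hK hxK
      rw [← listCylinder_res] at hk
      exact ⟨k, hk.symm.mono_left (listCylinder_anti (res_suffix_res x (Nat.le_add_left _ _)))⟩
    obtain ⟨k, hk, hk'⟩ := Nat.exists_not_and_succ_of_not_zero_of_exists hp₀ hp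
    have hsuffix : w <:+ res x (w.length + k) :=
      mem_listCylinder.1 hxw ▸ res_suffix_res x (by rw [res_length]; exact Nat.le_add_right _ _)
    refine ⟨_, .inl ⟨hsuffix, not_disjoint_iff_nonempty_inter.1 hk⟩,
      mem_listCylinder_res.2 rfl, ?_⟩
    rwa [exits, mem_ofPred_eq, res_length, ← res_succ]

theorem biUnion_leavingSet (hK : IsClosed K) (w : List α) :
    ⋃ c ∈ branchNodes K w, leavingSet K c = listCylinder w \ K := by
  refine Subset.antisymm (iUnion₂_subset fun c hc x hx => ⟨?_, fun hxK => ?_⟩) fun x hx => ?_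
  · exact listCylinder_anti (suffix_of_mem_branchNodes hc) hx.1
  · exact disjoint_left.1 hx.2 (mem_listCylinder_cons.2 ⟨rfl, hx.1⟩) hxK
  · simpa only [mem_iUnion₂, exists_prop] using
      exists_mem_branchNodes_mem_leavingSet hK hx.1 hx.2

end Topology

end Exits

section Carving

open PiNat

/-- An injective enumeration of `s`; a junk value if `s` is finite or uncountable. -/
noncomputable def enumeration {α : Type*} [Nonempty α] (s : Set α) : ℕ → α :=
  Classical.epsilon fun f => Function.Injective f ∧ range f = s

theorem enumeration_spec {α : Type*} [Nonempty α] [Countable α] {s : Set α} (hs : s.Infinite) :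
    Function.Injective (enumeration s) ∧ range (enumeration s) = s := by
  have := hs.to_subtype
  obtain ⟨e⟩ : Nonempty (ℕ ≃ s) := nonempty_equiv_of_countable
  refine Classical.epsilon_spec (p := fun f : ℕ → α => Function.Injective f ∧ range f = s)
    ⟨Subtype.val ∘ e, Subtype.val_injective.comp e.injective, ?_⟩
  rw [e.surjective.range_comp, Subtype.range_coe]

variable {K : ℕ → Set (ℕ → ℕ)} {l : List ℕ}

/-- The node of `ω^{<ω}` attached to a node `l` of the carved tree. With `n = l.length / 2`, a son
of `l` chooses where the points part from `K n` if `l` has even height, and takes an exit from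
`K n` if `l` has odd height. -/
noncomputable def carvedNode (K : ℕ → Set (ℕ → ℕ)) : List ℕ → List ℕ
  | [] => []
  | a :: l =>
    if Even l.length then enumeration (branchNodes (K (l.length / 2)) (carvedNode K l)) a
    else enumeration (exits (K (l.length / 2)) (carvedNode K l)) a :: carvedNode K l

/-- The leaf of the carved tree at `l`, before the points of `⋃ n, K n` are discarded. -/
noncomputable def carvedLeaf (K : ℕ → Set (ℕ → ℕ)) (l : List ℕ) : Set (ℕ → ℕ) :=
  if Even l.length then listCylinder (carvedNode K l)
  else leavingSet (K (l.length / 2)) (carvedNode K l)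

theorem even_length_cons {a : ℕ} : Even (a :: l).length ↔ ¬ Even l.length := Nat.even_add_one

theorem carvedLeaf_of_even (hl : Even l.length) :
    carvedLeaf K l = listCylinder (carvedNode K l) := if_pos hl

theorem carvedLeaf_of_not_even (hl : ¬ Even l.length) :
    carvedLeaf K l = leavingSet (K (l.length / 2)) (carvedNode K l) := if_neg hl

theorem carvedLeaf_subset_listCylinder (K : ℕ → Set (ℕ → ℕ)) (l : List ℕ) :
    carvedLeaf K l ⊆ listCylinder (carvedNode K l) := by
  by_cases hl : Even l.length
  · rw [carvedLeaf_of_even hl]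
  · rw [carvedLeaf_of_not_even hl]
    exact leavingSet_subset_listCylinder

theorem carvedNode_cons_of_even (hl : Even l.length) (a : ℕ) : carvedNode K (a :: l) =
    enumeration (branchNodes (K (l.length / 2)) (carvedNode K l)) a := if_pos hl

theorem carvedNode_cons_of_not_even (hl : ¬ Even l.length) (a : ℕ) : carvedNode K (a :: l) =
    enumeration (exits (K (l.length / 2)) (carvedNode K l)) a :: carvedNode K l := if_neg hl

theorem carvedLeaf_cons_of_even (hl : Even l.length) (a : ℕ) : carvedLeaf K (a :: l) =
    leavingSet (K (l.length / 2)) (carvedNode K (a :: l)) := by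
  have hcons : ¬ Even (a :: l).length := even_length_cons.not.2 (not_not.2 hl)
  rw [carvedLeaf_of_not_even hcons, List.length_cons, Nat.succ_div_of_not_dvd]
  rwa [← even_iff_two_dvd]

theorem carvedLeaf_cons_of_not_even (hl : ¬ Even l.length) (a : ℕ) : carvedLeaf K (a :: l) =
    listCylinder (enumeration (exits (K (l.length / 2)) (carvedNode K l)) a :: carvedNode K l) := by
  have hcons : Even (a :: l).length := even_length_cons.2 hl
  rw [carvedLeaf_of_even hcons, carvedNode_cons_of_not_even hl]

theorem iUnion_carvedLeaf_cons_of_even (hK : ∀ n, IsClosed (K n)) (hl : Even l.length) :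
    ⋃ a, carvedLeaf K (a :: l) = carvedLeaf K l \ K (l.length / 2) := by
  simp only [carvedLeaf_cons_of_even hl, carvedNode_cons_of_even hl]
  rw [← biUnion_range (g := leavingSet (K (l.length / 2))),
    (enumeration_spec (infinite_branchNodes _ _)).2, biUnion_leavingSet (hK _),
    carvedLeaf_of_even hl]

theorem iUnion_carvedLeaf_cons_of_not_even (hK : ∀ n, IsCompact (K n)) (hl : ¬ Even l.length) :
    ⋃ a, carvedLeaf K (a :: l) = carvedLeaf K l := by
  simp only [carvedLeaf_cons_of_not_even hl]
  rw [← biUnion_range (g := fun i => listCylinder (i :: carvedNode K l)),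
    (enumeration_spec (infinite_exits (hK _) _)).2, ← leavingSet_eq_biUnion,
    carvedLeaf_of_not_even hl]

theorem disjoint_carvedLeaf (hK : ∀ n, IsCompact (K n)) : CantorScheme.Disjoint (carvedLeaf K) := by
  intro l a b hab
  by_cases hl : Even l.length
  · have henum := enumeration_spec (infinite_branchNodes (K (l.length / 2)) (carvedNode K l))
    simp only [carvedLeaf_cons_of_even hl, carvedNode_cons_of_even hl]
    exact disjoint_leavingSet (henum.2.subset (mem_range_self a))
      (henum.2.subset (mem_range_self b)) (henum.1.ne hab)
  · have henum := enumeration_spec (infinite_exits (hK (l.length / 2)) (carvedNode K l))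
    simp only [carvedLeaf_cons_of_not_even hl]
    refine disjoint_left.2 fun x hxa hxb => hab (henum.1 ?_)
    rw [← (mem_listCylinder_cons.1 hxa).1, (mem_listCylinder_cons.1 hxb).1]

theorem isOpen_carvedLeaf (l : List ℕ) : IsOpen (carvedLeaf K l) := by
  by_cases hl : Even l.length
  · rw [carvedLeaf_of_even hl]
    exact isOpen_listCylinder _
  · rw [carvedLeaf_of_not_even hl, leavingSet_eq_biUnion]
    exact isOpen_biUnion fun _ _ => isOpen_listCylinder _

theorem carvedNode_suffix_cons (K : ℕ → Set (ℕ → ℕ)) (a : ℕ) (l : List ℕ) :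
    carvedNode K l <:+ carvedNode K (a :: l) := by
  by_cases hl : Even l.length
  · rw [carvedNode_cons_of_even hl]
    exact suffix_of_mem_branchNodes
      ((enumeration_spec (infinite_branchNodes _ _)).2.subset (mem_range_self a))
  · rw [carvedNode_cons_of_not_even hl]
    exact List.suffix_cons _ _

theorem strictSuffix_carvedNode_cons_cons (K : ℕ → Set (ℕ → ℕ)) (a b : ℕ) (l : List ℕ) :
    StrictSuffix (carvedNode K l) (carvedNode K (b :: a :: l)) := by
  by_cases hl : Even l.length
  · have hcons : ¬ Even (a :: l).length := even_length_cons.not.2 (not_not.2 hl)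
    rw [carvedNode_cons_of_not_even hcons, StrictSuffix.cons_right_iff]
    exact carvedNode_suffix_cons K a l
  · refine .of_suffix_of_length_lt
      ((carvedNode_suffix_cons K a l).trans (carvedNode_suffix_cons K b _))
      (lt_of_lt_of_le ?_ (carvedNode_suffix_cons K b _).length_le)
    rw [carvedNode_cons_of_not_even hl]
    exact Nat.lt_succ_self _

theorem carvedLeaf_cons_subset (hK : ∀ n, IsCompact (K n)) (a : ℕ) (l : List ℕ) :
    carvedLeaf K (a :: l) ⊆ carvedLeaf K l := by
  refine (subset_iUnion (fun a => carvedLeaf K (a :: l)) a).trans ?_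
  by_cases hl : Even l.length
  · rw [iUnion_carvedLeaf_cons_of_even (fun n => (hK n).isClosed) hl]
    exact sdiff_subset
  · exact (iUnion_carvedLeaf_cons_of_not_even hK hl).subset

theorem exists_iInter_carvedLeaf_res_eq_singleton (hK : ∀ n, IsCompact (K n)) (x : ℕ → ℕ) :
    ∃ y ∉ ⋃ n, K n, ⋂ n, carvedLeaf K (res x n) = {y} := by
  have even_two_mul : ∀ n, Even (res x (2 * n)).length := fun n => by simp
  have hanti : Antitone fun n => carvedLeaf K (res x n) :=
    antitone_nat_of_succ_le fun n => carvedLeaf_cons_subset hK (x n) (res x n)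
  obtain ⟨y, hy⟩ := exists_iInter_listCylinder_eq_singleton
    (w := fun n => carvedNode K (res x (2 * n))) fun n => strictSuffix_carvedNode_cons_cons K _ _ _
  have hleaf : ⋂ n, carvedLeaf K (res x n) = {y} := by
    rw [← hy]
    refine Subset.antisymm (subset_iInter fun n => ?_) (subset_iInter fun n => ?_)
    · exact (iInter_subset _ (2 * n)).trans (carvedLeaf_subset_listCylinder K _)
    · refine (iInter_subset _ n).trans ?_
      rw [← carvedLeaf_of_even (even_two_mul n)]
      exact hanti (Nat.le_mul_of_pos_left n two_pos)
  refine ⟨y, fun hyK => ?_, hleaf⟩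
  obtain ⟨n, hn⟩ := mem_iUnion.1 hyK
  have hmem : y ∈ carvedLeaf K (res x (2 * n + 1)) := mem_iInter.1 (hleaf.superset rfl) _
  have hdiff : y ∈ carvedLeaf K (res x (2 * n)) \ K ((res x (2 * n)).length / 2) := by
    rw [← iUnion_carvedLeaf_cons_of_even (fun n => (hK n).isClosed) (even_two_mul n)]
    exact mem_iUnion_of_mem _ hmem
  rw [res_length, Nat.mul_div_cancel_left n two_pos] at hdiff
  exact hdiff.2 hn

theorem isBaireScheme_carvedLeaf (hK : ∀ n, IsCompact (K n)) :
    IsBaireScheme fun l => (Subtype.val ⁻¹' carvedLeaf K l : Set ↥(⋃ n, K n)ᶜ) where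
  root := by rw [carvedLeaf_of_even Even.zero, carvedNode, listCylinder_nil, preimage_univ]
  iUnion_cons l := by
    rw [← preimage_iUnion]
    by_cases hl : Even l.length
    · rw [iUnion_carvedLeaf_cons_of_even (fun n => (hK n).isClosed) hl, preimage_sdiff,
        sdiff_eq_left]
      exact disjoint_left.2 fun p _ hp => p.2 (mem_iUnion_of_mem _ hp)
    · rw [iUnion_carvedLeaf_cons_of_not_even hK hl]
  disjoint l a b hab := (disjoint_carvedLeaf hK l hab).preimage _
  branch x := by
    obtain ⟨y, hyK, hy⟩ := exists_iInter_carvedLeaf_res_eq_singleton hK x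
    refine ⟨⟨y, hyK⟩, ?_⟩
    rw [← preimage_iInter, hy]
    ext p
    simp only [mem_preimage, mem_singleton_iff, Subtype.ext_iff]

theorem exists_equiv_compl_iUnion (hK : ∀ n, IsCompact (K n)) :
    ∃ ψ : ↥(⋃ n, K n)ᶜ ≃ (ℕ → ℕ), Continuous ψ ∧ ∀ p, ∃ f : ℕ → ℕ, StrictMono f ∧
      ∀ n, ∃ j : ℕ → ℕ, Function.Injective j ∧ ∀ k,
        ψ ⁻¹' listCylinder (k :: res (ψ p) (2 * n + 1)) =
          Subtype.val ⁻¹' listCylinder (j k :: res p.1 (f n)) := by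
  obtain ⟨ψ, hψ⟩ := (isBaireScheme_carvedLeaf hK).exists_equiv
  refine ⟨ψ, continuous_iff_isOpen_preimage_listCylinder.2 fun l => ?_, fun p => ?_⟩
  · rw [← hψ]
    exact (isOpen_carvedLeaf l).preimage continuous_subtype_val
  · let u : ℕ → List ℕ := fun n => carvedNode K (res (ψ p) (2 * n + 1))
    have hodd : ∀ n, ¬ Even (res (ψ p) (2 * n + 1)).length := fun n => by simp
    have hu : ∀ n, res p.1 (u n).length = u n := fun n => by
      have hp : p ∈ ψ ⁻¹' listCylinder (res (ψ p) (2 * n + 1)) := mem_listCylinder_res.2 rfl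
      rw [← hψ] at hp
      exact carvedLeaf_subset_listCylinder K _ hp
    refine ⟨fun n => (u n).length, strictMono_nat_of_lt_succ fun n =>
      (strictSuffix_carvedNode_cons_cons K _ _ _).length_lt, fun n => ?_⟩
    refine ⟨_, (enumeration_spec (infinite_exits (hK ((res (ψ p) (2 * n + 1)).length / 2))
      (u n))).1, fun k => ?_⟩
    rw [← hψ, carvedLeaf_cons_of_not_even (hodd n), hu]

end Carving

theorem isSigmaCompact_of_countable {X : Type*} [TopologicalSpace X] {A : Set X}
    (hA : A.Countable) : IsSigmaCompact A := by
  rw [← biUnion_of_singleton A]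
  exact isSigmaCompact_biUnion hA fun x _ => isCompact_singleton.isSigmaCompact

theorem exists_baireFoliageTree_on_cocountable_subspace_general
    {X : Type u} [TopologicalSpace X] (F : FoliageTree X)
    (hF : F.IsBaireFoliageTree) (A : Set X) (hA : IsSigmaCompact A) :
    ∃ H : FoliageTree ↥(Aᶜ), H.IsBaireFoliageTree ∧
      ∀ p : ↥(Aᶜ), ∃ f : ℕ → ℕ, StrictMono f ∧
        ∀ U : Set X,
          {k | ∃ n : ℕ, k = 2 * n + 1 ∧ f n ∈ F.rise (p : X) U} ⊆
            H.rise p (Subtype.val ⁻¹' U) := by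
  obtain ⟨φ, hφ, hFφ⟩ := FoliageTree.isBaireFoliageTree_iff.1 hF
  obtain ⟨K, hK, hKA⟩ := hA.image hφ
  obtain ⟨ψ, hψ, hlevel⟩ := exists_equiv_compl_iUnion hK
  let φA : ↥(Aᶜ) ≃ ↥(⋃ n, K n)ᶜ := φ.subtypeEquiv fun x => by
    rw [hKA, mem_compl_iff, mem_compl_iff, φ.injective.mem_set_image]
  have hφA : Continuous φA := (hφ.comp continuous_subtype_val).subtype_mk _
  let χ : ↥(Aᶜ) ≃ (ℕ → ℕ) := φA.trans ψ
  have hHχ := FoliageTree.isCodedBy_codeTree χ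
  refine ⟨FoliageTree.codeTree χ,
    FoliageTree.isBaireFoliageTree_iff.2 ⟨χ, hψ.comp hφA, hHχ⟩, fun p => ?_⟩
  obtain ⟨f, hf, hsons⟩ := hlevel (φA p)
  refine ⟨f, hf, ?_⟩
  rintro U _ ⟨n, rfl, hn⟩
  obtain ⟨j, hj, hjsons⟩ := hsons n
  exact hFφ.mem_rise_of_preimage_subset φ.surjective hHχ χ.surjective hj
    (fun k => (congrArg (φA ⁻¹' ·) (hjsons k)).subset) hn

/-- Proposition `prop.f.tree.for.X-A` of the paper. -/
theorem exists_baireFoliageTree_on_cocountable_subspace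
    {X : Type u} [TopologicalSpace X] (F : FoliageTree X)
    (hF : F.IsBaireFoliageTree) (A : Set X) (hA : A.Countable) :
    ∃ H : FoliageTree ↥(Aᶜ), H.IsBaireFoliageTree ∧
      ∀ p : ↥(Aᶜ), ∃ f : ℕ → ℕ, StrictMono f ∧
        ∀ U ∈ nhds (p : X),
          {k | ∃ n : ℕ, k = 2 * n + 1 ∧ f n ∈ F.rise (p : X) U} ⊆
            H.rise p (Subtype.val ⁻¹' U) := by
  obtain ⟨H, hH, hrise⟩ := exists_baireFoliageTree_on_cocountable_subspace_general F hF A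
    (isSigmaCompact_of_countable hA)
  exact ⟨H, hH, fun p => (hrise p).imp fun f hf => ⟨hf.1, fun U _ => hf.2 U⟩⟩
end
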